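/- arXiv:1704.06195 — 2 statements merged into one kernel-verified Lean document; each statement's English description precedes it below -/
import Mathlib

section
/- Let p be a nonzero multiaffine real stable polynomial in ℝ[z_1,…,z_{2n}] with a ∈ ℝ^{2n} above the roots of p, normalized so that p(a) > 0. Let δ_1,…,δ_{2n} ≥ 0 satisfy, for each i ∈ [n]: (∂_i p + ∂_{n+i} p)(a) > 0 and δ_i + δ_{n+i} ≤ p(a)/((∂_i p + ∂_{n+i} p)(a)). Let q = [∏_{i=1}^{n} (∂_i + ∂_{n+i})] p and assume q is not identically zero. Then the point a − Σ_{i=1}^{2n} δ_i e_i is above the roots of q, and for every k ∈ [2n], (∂_k q/q)(a − Σ_{i=1}^{2n} δ_i e_i) ≤ (∂_k p/p)(a). -/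
/-- A multivariate real polynomial is real stable if it does not vanish when all
variables take values in the open upper half plane. -/
def RealStable {σ : Type*} (p : MvPolynomial σ ℝ) : Prop :=
  ∀ z : σ → ℂ, (∀ i, 0 < (z i).im) → (MvPolynomial.aeval z) p ≠ 0

/-- degree at most 1 in each variable -/
def MultiAffine {σ : Type*} (p : MvPolynomial σ ℝ) : Prop :=
  ∀ m ∈ p.support, ∀ i, m i ≤ 1

/-- `a` is above the roots of `p` if `p` does not vanish on `a + ℝ₊ⁿ`. -/
def AboveRoots {σ : Type*} (p : MvPolynomial σ ℝ) (a : σ → ℝ) : Prop :=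
  ∀ t : σ → ℝ, (∀ i, 0 ≤ t i) → MvPolynomial.eval (a + t) p ≠ 0

/-!
For a multiaffine real stable polynomial the logarithmic derivatives `∂ₖp / p` map the open upper
half planes to the closed lower half plane. Letting the imaginary parts tend to `0` yields the
Rayleigh inequalities `p · ∂ₖ∂ᵢp ≤ ∂ᵢp · ∂ₖp` at all real points, so above the roots the potentials
`Φᵏ = ∂ₖp / p` are nonincreasing in every coordinate.

For a single step `q = ∂ᵢp + ∂ⱼp`, the claim `Φᵏ_q(a - δᵢeᵢ - δⱼeⱼ) ≤ Φᵏ_p(a)` depends only on the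
restriction of `p` to the coordinates `i`, `j`, `k`. The Rayleigh inequality for `i`, `k` along the
direction `j` makes a real quadratic nonnegative; its discriminant is Cayley's `2 × 2 × 2`
hyperdeterminant of the coefficients, and nonpositivity of the latter yields the claim. To iterate,
note that a nonzero `q` is again real stable, by the open mapping theorem applied to `q / p`, and
that the bound on the shifts persists for `q` because the step increases no potential.
-/

open MvPolynomial Filter Topology

section MultiAffine

variable {σ : Type*} {p q : MvPolynomial σ ℝ}

theorem pderiv_pderiv_comm {R : Type*} [CommSemiring R] (i j : σ) (p : MvPolynomial σ R) :
    pderiv i (pderiv j p) = pderiv j (pderiv i p) := by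
  classical
  rcases eq_or_ne i j with rfl | h
  · rfl
  · ext m
    simp only [coeff_pderiv, Finsupp.add_apply, Finsupp.single_eq_of_ne h,
      Finsupp.single_eq_of_ne h.symm, add_zero]
    rw [add_right_comm, mul_right_comm]

protected theorem MultiAffine.pderiv (hp : MultiAffine p) (i : σ) : MultiAffine (pderiv i p) := by
  intro m hm k
  rw [mem_support_iff, coeff_pderiv] at hm
  have h := hp (m + Finsupp.single i 1) (mem_support_iff.2 (left_ne_zero_of_mul hm)) k
  exact le_self_add.trans h

protected theorem MultiAffine.add (hp : MultiAffine p) (hq : MultiAffine q) :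
    MultiAffine (p + q) := by
  classical
  intro m hm
  exact (Finset.mem_union.1 (support_add hm)).elim (hp m) (hq m)

theorem MultiAffine.pderiv_pderiv_self (hp : MultiAffine p) (i : σ) :
    pderiv i (pderiv i p) = 0 := by
  ext m
  rw [coeff_pderiv, coeff_pderiv, coeff_zero]
  by_contra h
  simpa using hp _ (mem_support_iff.2 (left_ne_zero_of_mul (left_ne_zero_of_mul h))) i

theorem MultiAffine.aeval_add_single [DecidableEq σ] {A : Type*} [CommRing A] [Algebra ℝ A]
    (hp : MultiAffine p) (z : σ → A) (i : σ) (s : A) :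
    aeval (z + Pi.single i s) p = aeval z p + s * aeval z (pderiv i p) := by
  rw [p.as_sum]
  simp only [map_sum, Finset.mul_sum, ← Finset.sum_add_distrib]
  refine Finset.sum_congr rfl fun m hm => ?_
  have prod_eq (w : σ → A) : (m.prod fun k e => w k ^ e) =
      w i ^ m i * (m.erase i).prod fun k e => w k ^ e :=
    (m.mul_prod_erase' i (fun k e => w k ^ e) fun k => pow_zero (w k)).symm
  have prod_erase_eq : ((m.erase i).prod fun k e => (z + Pi.single i s : σ → A) k ^ e) =
      (m.erase i).prod fun k e => z k ^ e :=
    Finsupp.prod_congr fun k hk => by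
      rw [Finsupp.support_erase] at hk
      simp [Finset.ne_of_mem_erase hk]
  rw [pderiv_monomial, aeval_monomial, aeval_monomial, aeval_monomial, prod_eq (z + _),
    prod_erase_eq, prod_eq z]
  rcases Nat.le_one_iff_eq_zero_or_eq_one.1 (hp m hm i) with h | h
  · simp [h]
  · have sub_eq_erase : m - Finsupp.single i 1 = m.erase i := by
      ext k
      rcases eq_or_ne k i with rfl | hk
      · simp [h]
      · simp [hk]
    rw [sub_eq_erase, h, Pi.add_apply, Pi.single_eq_same, pow_one, pow_one, Nat.cast_one, mul_one]
    ring

theorem MultiAffine.eval_add_single [DecidableEq σ] (hp : MultiAffine p) (x : σ → ℝ) (i : σ)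
    (s : ℝ) : eval (x + Pi.single i s) p = eval x p + s * eval x (pderiv i p) :=
  hp.aeval_add_single x i s

theorem MultiAffine.eval_sub_pderiv_add_pderiv [DecidableEq σ] (hp : MultiAffine p) (i j : σ)
    (x : σ → ℝ) (d e : ℝ) :
    eval (x - (Pi.single i d + Pi.single j e)) (pderiv i p + pderiv j p) =
      eval x (pderiv i p) + eval x (pderiv j p) - (d + e) * eval x (pderiv j (pderiv i p)) := by
  have shift_eq :
      x - (Pi.single i d + Pi.single j e) = x + Pi.single i (-d) + Pi.single j (-e) := by
    rw [Pi.single_neg, Pi.single_neg]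
    abel
  have hi := hp.pderiv i
  have hj := hp.pderiv j
  rw [shift_eq, map_add, hi.eval_add_single, hi.eval_add_single, (hi.pderiv j).eval_add_single,
    hj.eval_add_single, hj.eval_add_single, (hj.pderiv j).eval_add_single,
    pderiv_pderiv_comm i j p, pderiv_pderiv_comm i j (pderiv i p),
    hp.pderiv_pderiv_self i, hp.pderiv_pderiv_self j]
  simp only [map_zero]
  ring

end MultiAffine

section RealStable

variable {σ : Type*} {p q : MvPolynomial σ ℝ}

theorem RealStable.im_pderiv_div_nonpos (hps : RealStable p) (hpm : MultiAffine p) (i : σ)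
    {z : σ → ℂ} (hz : ∀ l, 0 < (z l).im) : (aeval z (pderiv i p) / aeval z p).im ≤ 0 := by
  classical
  by_contra! him
  set w := aeval z (pderiv i p) / aeval z p with hw
  have hp0 : aeval z p ≠ 0 := hps z hz
  have hw0 : w ≠ 0 := by
    rintro h
    simp [h] at him
  have hs : 0 < (-w⁻¹).im := by
    rw [Complex.neg_im, Complex.inv_im, neg_div, neg_neg]
    exact div_pos him (Complex.normSq_pos.2 hw0)
  -- `-1 / w` is the root of `s ↦ p(z + s eᵢ) = p(z) (1 + s w)`.
  refine hps (z + Pi.single i (-w⁻¹)) (fun l => ?_) ?_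
  · rcases eq_or_ne l i with rfl | hl
    · simpa using add_pos (hz l) hs
    · simpa [hl] using hz l
  · have hpw : aeval z (pderiv i p) = w * aeval z p := by rw [hw, div_mul_cancel₀ _ hp0]
    rw [hpm.aeval_add_single, hpw, neg_mul, inv_mul_cancel_left₀ hw0, add_neg_cancel]

theorem RealStable.im_pderiv_mul_conj_nonpos (hps : RealStable p) (hpm : MultiAffine p) (i : σ)
    {z : σ → ℂ} (hz : ∀ l, 0 ≤ (z l).im) :
    (aeval z (pderiv i p) * starRingEnd ℂ (aeval z p)).im ≤ 0 := by
  let Z (η : ℝ) : σ → ℂ := fun l => z l + η * Complex.I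
  have continuous_aeval (g : MvPolynomial σ ℝ) : Continuous fun η => aeval (Z η) g := by
    simp only [aeval_def, eval₂_eq_eval_map]
    exact (continuous_eval _).comp (by fun_prop)
  have tendsto_Z : Tendsto (fun η => (aeval (Z η) (pderiv i p) *
      starRingEnd ℂ (aeval (Z η) p)).im) (𝓝[>] 0)
      (𝓝 (aeval (Z 0) (pderiv i p) * starRingEnd ℂ (aeval (Z 0) p)).im) :=
    ((Complex.continuous_im.comp ((continuous_aeval _).mul
      (Complex.continuous_conj.comp (continuous_aeval _)))).tendsto 0).mono_left nhdsWithin_le_nhds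
  have hZ0 : Z 0 = z := by simp [Z]
  rw [← hZ0]
  refine le_of_tendsto tendsto_Z ?_
  filter_upwards [self_mem_nhdsWithin] with η hη
  have hZ (l : σ) : 0 < (Z η l).im := by simpa [Z] using add_pos_of_nonneg_of_pos (hz l) hη
  have mul_conj_eq : aeval (Z η) (pderiv i p) * starRingEnd ℂ (aeval (Z η) p) =
      aeval (Z η) (pderiv i p) / aeval (Z η) p * (Complex.normSq (aeval (Z η) p) : ℝ) := by
    rw [← Complex.mul_conj, ← mul_assoc, div_mul_cancel₀ _ (hps _ hZ)]
  rw [mul_conj_eq, Complex.im_mul_ofReal]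
  exact mul_nonpos_of_nonpos_of_nonneg (hps.im_pderiv_div_nonpos hpm i hZ) (Complex.normSq_nonneg _)

theorem RealStable.rayleigh (hps : RealStable p) (hpm : MultiAffine p) (i j : σ) (x : σ → ℝ) :
    eval x p * eval x (pderiv j (pderiv i p)) ≤ eval x (pderiv i p) * eval x (pderiv j p) := by
  classical
  have aeval_ofReal (g : MvPolynomial σ ℝ) :
      aeval (fun l => (x l : ℂ)) g = ((eval x g : ℝ) : ℂ) :=
    aeval_algebraMap_apply ℂ x g
  have h := hps.im_pderiv_mul_conj_nonpos hpm i
    (z := (fun l => (x l : ℂ)) + Pi.single j Complex.I) fun l => by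
      rcases eq_or_ne l j with rfl | hl <;> simp [*]
  simp only [hpm.aeval_add_single, (hpm.pderiv i).aeval_add_single, aeval_ofReal, map_add,
    map_mul, Complex.conj_ofReal, Complex.conj_I, Complex.mul_im, Complex.add_re, Complex.add_im,
    Complex.mul_re, Complex.neg_re, Complex.neg_im, Complex.I_re, Complex.I_im, Complex.ofReal_re,
    Complex.ofReal_im] at h
  linarith

theorem eventually_eq_of_eventually_im_nonpos {E : Type*} [NormedAddCommGroup E]
    [NormedSpace ℂ E] {f : E → ℂ} {z : E} (hf : AnalyticAt ℂ f z)
    (him : ∀ᶠ w in 𝓝 z, (f w).im ≤ 0) (hz : (f z).im = 0) : ∀ᶠ w in 𝓝 z, f w = f z := by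
  refine hf.eventually_constant_or_nhds_le_map_nhds.resolve_right fun hopen => ?_
  have hle : ∀ᶠ w in 𝓝 (f z), w.im ≤ 0 := hopen him
  have hmem : f z ∈ closure {w : ℂ | 0 < w.im} := by
    rw [Complex.closure_setOfPred_lt_im]
    exact hz.ge
  obtain ⟨w, hw_pos, hw_le⟩ := ((mem_closure_iff_frequently.1 hmem).and_eventually hle).exists
  exact hw_le.not_gt hw_pos

theorem eq_zero_of_eventually_aeval_eq_zero {R 𝕜 : Type*} [CommRing R]
    [NontriviallyNormedField 𝕜] [Algebra R 𝕜] [FaithfulSMul R 𝕜] {p : MvPolynomial σ R}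
    {z : σ → 𝕜} (h : ∀ᶠ w in 𝓝 z, aeval w p = 0) : p = 0 := by
  rw [nhds_pi] at h
  obtain ⟨I, s, hs, hsub⟩ := mem_pi'.1 h
  refine map_injective (algebraMap R 𝕜) (FaithfulSMul.algebraMap_injective R 𝕜) ?_
  refine funext_set s (fun l => infinite_of_mem_nhds (z l) (hs l)) fun w hw => ?_
  rw [← eval₂_eq_eval_map, ← aeval_def, map_zero, map_zero]
  exact hsub fun l _ => hw l (Set.mem_univ l)

theorem RealStable.of_im_div_nonpos [Finite σ] (hps : RealStable p) (hq : q ≠ 0)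
    (him : ∀ z : σ → ℂ, (∀ l, 0 < (z l).im) → (aeval z q / aeval z p).im ≤ 0) :
    RealStable q := by
  cases nonempty_fintype σ
  intro z hz hqz
  refine hq (eq_zero_of_eventually_aeval_eq_zero (z := z) ?_)
  have upper_half : ∀ᶠ w in 𝓝 z, ∀ l, 0 < (w l).im := eventually_all.2 fun l =>
    (Complex.continuous_im.comp (continuous_apply l)).continuousAt.eventually
      (lt_mem_nhds (hz l))
  have analyticAt_aeval (g : MvPolynomial σ ℝ) : AnalyticAt ℂ (fun w => aeval w g) z :=
    .aeval_mvPolynomial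
      (fun l => (ContinuousLinearMap.proj (R := ℂ) (φ := fun _ : σ => ℂ) l).analyticAt z) g
  have quotient_eq := eventually_eq_of_eventually_im_nonpos
    ((analyticAt_aeval q).div (analyticAt_aeval p) (hps z hz)) (upper_half.mono him) (by simp [hqz])
  filter_upwards [quotient_eq, upper_half] with w hw hw_im
  simpa [hqz, hps w hw_im] using hw

theorem RealStable.pderiv_add_pderiv [Finite σ] (hps : RealStable p) (hpm : MultiAffine p)
    (i j : σ) (hq : pderiv i p + pderiv j p ≠ 0) : RealStable (pderiv i p + pderiv j p) :=
  hps.of_im_div_nonpos hq fun z hz => by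
    rw [map_add, add_div, Complex.add_im]
    exact add_nonpos (hps.im_pderiv_div_nonpos hpm i hz) (hps.im_pderiv_div_nonpos hpm j hz)

end RealStable

section AboveRoots

variable {σ : Type*} {p : MvPolynomial σ ℝ} {x : σ → ℝ}

/-- `p` is positive on the orthant `x + ℝ₊ⁿ`: the normalized form of `x` being above the roots
of `p`. -/
def PosAboveRoots (p : MvPolynomial σ ℝ) (x : σ → ℝ) : Prop :=
  ∀ t : σ → ℝ, 0 ≤ t → 0 < eval (x + t) p

/-- The potential `Φᵏ_p(x) = (∂ₖp / p)(x)` of a polynomial, that is `∂ₖ log p` where `p` is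
positive. At the zeros of `p` it takes the junk value `0`. -/
noncomputable def potential (p : MvPolynomial σ ℝ) (k : σ) (x : σ → ℝ) : ℝ :=
  eval x (pderiv k p) / eval x p

theorem AboveRoots.posAboveRoots (hx : AboveRoots p x) (hpx : 0 < eval x p) :
    PosAboveRoots p x := by
  intro t ht
  by_contra! hle
  have hcont : Continuous fun r : ℝ => eval (x + r • t) p :=
    (continuous_eval p).comp (by fun_prop)
  obtain ⟨r, hr, hroot⟩ := intermediate_value_Icc' zero_le_one hcont.continuousOn
    (show (0 : ℝ) ∈ Set.Icc _ _ by simpa using ⟨hle, hpx.le⟩)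
  exact hx (r • t) (smul_nonneg hr.1 ht) hroot

theorem nonneg_of_forall_add_mul_nonneg {c d : ℝ} (h : ∀ s, 0 ≤ s → 0 ≤ c + s * d) : 0 ≤ d := by
  by_contra! hd
  have hc : 0 ≤ c := by simpa using h 0 le_rfl
  have hneg := h ((c + 1) / -d) (div_nonneg (by linarith) (by linarith))
  rw [div_neg, neg_mul, div_mul_cancel₀ _ hd.ne] at hneg
  linarith

namespace PosAboveRoots

theorem eval_pos (hx : PosAboveRoots p x) : 0 < eval x p := by
  simpa using hx 0 le_rfl

theorem aboveRoots (hx : PosAboveRoots p x) : AboveRoots p x :=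
  fun t ht => (hx t ht).ne'

protected theorem add (hx : PosAboveRoots p x) {t : σ → ℝ} (ht : 0 ≤ t) :
    PosAboveRoots p (x + t) := by
  intro s hs
  rw [add_assoc]
  exact hx _ (add_nonneg ht hs)

theorem eval_pderiv_nonneg (hx : PosAboveRoots p x) (hpm : MultiAffine p) (k : σ) :
    0 ≤ eval x (pderiv k p) := by
  classical
  refine nonneg_of_forall_add_mul_nonneg (c := eval x p) fun s hs => ?_
  rw [← hpm.eval_add_single]
  exact (hx _ (Pi.single_nonneg.2 hs)).le

theorem eval_pderiv_pderiv_nonneg (hx : PosAboveRoots p x) (hpm : MultiAffine p) (k i : σ) :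
    0 ≤ eval x (pderiv k (pderiv i p)) := by
  classical
  refine nonneg_of_forall_add_mul_nonneg (c := eval x (pderiv i p)) fun s hs => ?_
  rw [← (hpm.pderiv i).eval_add_single]
  exact (hx.add (Pi.single_nonneg.2 hs)).eval_pderiv_nonneg hpm i

theorem potential_add_single_le [DecidableEq σ] (hx : PosAboveRoots p x) (hps : RealStable p)
    (hpm : MultiAffine p) (i k : σ) {s : ℝ} (hs : 0 ≤ s) :
    potential p i (x + Pi.single k s) ≤ potential p i x := by
  rw [potential, potential, div_le_div_iff₀ (hx _ (Pi.single_nonneg.2 hs)) hx.eval_pos,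
    hpm.eval_add_single, (hpm.pderiv i).eval_add_single]
  linarith [mul_le_mul_of_nonneg_left (hps.rayleigh hpm i k x) hs]

theorem potential_add_le [Finite σ] (hx : PosAboveRoots p x) (hps : RealStable p)
    (hpm : MultiAffine p) (i : σ) {t : σ → ℝ} (ht : 0 ≤ t) :
    potential p i (x + t) ≤ potential p i x := by
  classical
  cases nonempty_fintype σ
  have partial_sum_le (S : Finset σ) :
      potential p i (x + ∑ l ∈ S, Pi.single l (t l)) ≤ potential p i x := by
    induction S using Finset.induction_on with
    | empty => simp
    | insert k S hk ih =>
      have hS : 0 ≤ ∑ l ∈ S, Pi.single l (t l) :=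
        Finset.sum_nonneg fun l _ => Pi.single_nonneg.2 (ht l)
      rw [Finset.sum_insert hk, add_comm (Pi.single (M := fun _ => ℝ) k (t k)), ← add_assoc]
      exact ((hx.add hS).potential_add_single_le hps hpm i k (ht k)).trans ih
  simpa only [Finset.univ_sum_single] using partial_sum_le Finset.univ

theorem pderiv_eq_zero [Finite σ] (hx : PosAboveRoots p x) (hps : RealStable p)
    (hpm : MultiAffine p) {i : σ} (h : eval x (pderiv i p) = 0) : pderiv i p = 0 := by
  refine funext_set (fun l => Set.Ici (x l)) (fun l => Set.Ici_infinite _) fun y hy => ?_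
  have hxy : 0 ≤ y - x := fun l => sub_nonneg.2 (hy l (Set.mem_univ l))
  have hy_pos : PosAboveRoots p y := by simpa using hx.add hxy
  have hle : potential p i y ≤ 0 := by
    simpa [potential, h] using hx.potential_add_le hps hpm i hxy
  rw [map_zero]
  rw [potential, div_le_iff₀ hy_pos.eval_pos, zero_mul] at hle
  exact hle.antisymm (hy_pos.eval_pderiv_nonneg hpm i)

theorem eval_pderiv_add_pderiv_pos [Finite σ] (hx : PosAboveRoots p x) (hps : RealStable p)
    (hpm : MultiAffine p) {i j : σ} (hq : pderiv i p + pderiv j p ≠ 0) :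
    0 < eval x (pderiv i p + pderiv j p) := by
  rw [map_add]
  have hi := hx.eval_pderiv_nonneg hpm i
  have hj := hx.eval_pderiv_nonneg hpm j
  refine (add_nonneg hi hj).lt_of_ne' fun h => hq ?_
  obtain ⟨hi0, hj0⟩ := (add_eq_zero_iff_of_nonneg hi hj).1 h
  rw [hx.pderiv_eq_zero hps hpm hi0, hx.pderiv_eq_zero hps hpm hj0, add_zero]

theorem mul_potential_add_potential_le_one_iff (hx : PosAboveRoots p x) (i j : σ) (d : ℝ) :
    d * (potential p i x + potential p j x) ≤ 1 ↔
      d * eval x (pderiv i p + pderiv j p) ≤ eval x p := by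
  rw [potential, potential, ← add_div, ← map_add, ← mul_div_assoc, div_le_one hx.eval_pos]

end PosAboveRoots

end AboveRoots

section PotentialShift

-- The difference of the two sides is `p²` times the discriminant of the quadratic `h` in `s`.
-- Divided by `p⁶`, the bound reads `(∂₁∂₂∂₃ log p)² ≤ -4 (∂₁∂₂ log p) (∂₁∂₃ log p) (∂₂∂₃ log p)`.
theorem third_cumulant_sq_le_of_rayleigh {p p₁ p₂ p₃ p₁₂ p₁₃ p₂₃ p₁₂₃ : ℝ}
    (h : ∀ s, (p + s * p₂) * (p₁₃ + s * p₁₂₃) ≤ (p₁ + s * p₁₂) * (p₃ + s * p₂₃)) :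
    (p ^ 2 * p₁₂₃ - p * (p₁ * p₂₃ + p₂ * p₁₃ + p₃ * p₁₂) + 2 * p₁ * p₂ * p₃) ^ 2 ≤
      4 * (p₁ * p₂ - p * p₁₂) * (p₁ * p₃ - p * p₁₃) * (p₂ * p₃ - p * p₂₃) := by
  have discrim_nonpos := discrim_le_zero (a := p₁₂ * p₂₃ - p₂ * p₁₂₃)
    (b := p₁ * p₂₃ + p₁₂ * p₃ - p * p₁₂₃ - p₂ * p₁₃) (c := p₁ * p₃ - p * p₁₃)
    fun s => by linarith [h s]
  have := mul_nonpos_of_nonneg_of_nonpos (sq_nonneg p) discrim_nonpos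
  rw [discrim] at this
  linarith

theorem potential_shift_coeff_le {p p₁ p₂ p₃ p₁₂ p₁₃ p₂₃ p₁₂₃ d : ℝ} (hp : 0 < p) (h₁ : 0 ≤ p₁)
    (h₂ : 0 ≤ p₂) (h₁₂ : 0 ≤ p₁₂) (h₂₃ : p * p₂₃ ≤ p₂ * p₃)
    (h : ∀ s, (p + s * p₂) * (p₁₃ + s * p₁₂₃) ≤ (p₁ + s * p₁₂) * (p₃ + s * p₂₃))
    (hd : 0 ≤ d) (hdp : d * (p₁ + p₂) ≤ p) :
    p * (p₁₃ + p₂₃ - d * p₁₂₃) ≤ p₃ * (p₁ + p₂ - d * p₁₂) := by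
  set u := p₁ * p₃ - p * p₁₃ with hu_def
  set v := p₂ * p₃ - p * p₂₃ with hv_def
  set K := p ^ 2 * p₁₂₃ - p * (p₁ * p₂₃ + p₂ * p₁₃ + p₃ * p₁₂) + 2 * p₁ * p₂ * p₃ with hK_def
  have hu : 0 ≤ u := by linarith [h 0]
  have hv : 0 ≤ v := sub_nonneg.2 h₂₃
  have K_sq_le : K ^ 2 ≤ (p₁ * u + p₂ * v) ^ 2 :=
    calc K ^ 2 ≤ 4 * (p₁ * p₂ - p * p₁₂) * u * v := third_cumulant_sq_le_of_rayleigh h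
      _ ≤ 4 * (p₁ * p₂) * u * v := by
        gcongr
        exact sub_le_self _ (by positivity)
      _ ≤ (p₁ * u + p₂ * v) ^ 2 := by linarith [sq_nonneg (p₁ * u - p₂ * v)]
  have neg_K_le : -K ≤ p₁ * u + p₂ * v :=
    neg_le.1 (abs_le_of_sq_le_sq' K_sq_le (add_nonneg (mul_nonneg h₁ hu) (mul_nonneg h₂ hv))).1
  have key : p * (d * (p₃ * p₁₂ - p * p₁₂₃)) ≤ p * (u + v) :=
    calc p * (d * (p₃ * p₁₂ - p * p₁₂₃)) = d * (p₁ * v + p₂ * u - K) := by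
          rw [hK_def, hu_def, hv_def]
          ring
      _ ≤ d * ((p₁ + p₂) * (u + v)) := by
        gcongr
        linarith
      _ = d * (p₁ + p₂) * (u + v) := by ring
      _ ≤ p * (u + v) := by gcongr
  linarith [le_of_mul_le_mul_left key hp]

variable {σ : Type*} {p : MvPolynomial σ ℝ} {a : σ → ℝ} {i j : σ} {d e : ℝ}

section SingleStep

variable [Finite σ] [DecidableEq σ] (ha : PosAboveRoots p a) (hps : RealStable p)
  (hpm : MultiAffine p) (hq : pderiv i p + pderiv j p ≠ 0)
include ha hps hpm hq

theorem PosAboveRoots.eval_sub_pderiv_add_pderiv_pos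
    (hde : (d + e) * (potential p i a + potential p j a) ≤ 1) :
    0 < eval (a - (Pi.single i d + Pi.single j e)) (pderiv i p + pderiv j p) := by
  have hpos := ha.eval_pderiv_add_pderiv_pos hps hpm hq
  rw [ha.mul_potential_add_potential_le_one_iff] at hde
  rw [hpm.eval_sub_pderiv_add_pderiv]
  rw [map_add] at hpos hde
  set x := eval a (pderiv i p)
  set y := eval a (pderiv j p)
  have hx : 0 ≤ x := ha.eval_pderiv_nonneg hpm i
  have hy : 0 ≤ y := ha.eval_pderiv_nonneg hpm j
  set m := eval a (pderiv j (pderiv i p))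
  have hm : 0 ≤ m := ha.eval_pderiv_pderiv_nonneg hpm j i
  have shift_mul_le : (d + e) * m * (x + y) ≤ x * y :=
    calc (d + e) * m * (x + y) = (d + e) * (x + y) * m := by ring
      _ ≤ eval a p * m := by gcongr
      _ ≤ x * y := hps.rayleigh hpm i j a
  refine (mul_pos_iff_of_pos_right hpos).1 ?_
  nlinarith [mul_nonneg hx hy, mul_pos hpos hpos]

theorem PosAboveRoots.sub_pderiv_add_pderiv (hde0 : 0 ≤ d + e)
    (hde : (d + e) * (potential p i a + potential p j a) ≤ 1) :
    PosAboveRoots (pderiv i p + pderiv j p) (a - (Pi.single i d + Pi.single j e)) := by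
  intro t ht
  rw [sub_add_eq_add_sub]
  refine (ha.add ht).eval_sub_pderiv_add_pderiv_pos hps hpm hq (le_trans ?_ hde)
  gcongr <;> exact ha.potential_add_le hps hpm _ ht

theorem PosAboveRoots.potential_sub_pderiv_add_pderiv_le (hde0 : 0 ≤ d + e)
    (hde : (d + e) * (potential p i a + potential p j a) ≤ 1) (k : σ) :
    potential (pderiv i p + pderiv j p) k (a - (Pi.single i d + Pi.single j e)) ≤
      potential p k a := by
  rw [potential, potential,
    div_le_div_iff₀ (ha.eval_sub_pderiv_add_pderiv_pos hps hpm hq hde) ha.eval_pos,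
    map_add (pderiv k), pderiv_pderiv_comm k i, pderiv_pderiv_comm k j,
    (hpm.pderiv k).eval_sub_pderiv_add_pderiv, hpm.eval_sub_pderiv_add_pderiv, mul_comm]
  rw [ha.mul_potential_add_potential_le_one_iff, map_add] at hde
  refine potential_shift_coeff_le ha.eval_pos (ha.eval_pderiv_nonneg hpm i)
    (ha.eval_pderiv_nonneg hpm j) (ha.eval_pderiv_pderiv_nonneg hpm j i) ?_ (fun s => ?_)
    hde0 hde
  · rw [mul_comm (eval a (pderiv j p))]
    exact hps.rayleigh hpm k j a
  · have rayleigh_along := hps.rayleigh hpm k i (a + Pi.single j s)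
    rw [hpm.eval_add_single, (hpm.pderiv k).eval_add_single, (hpm.pderiv i).eval_add_single,
      ((hpm.pderiv k).pderiv i).eval_add_single] at rayleigh_along
    rwa [mul_comm (_ + _ * eval a (pderiv j (pderiv i p)))]

end SingleStep

theorem potential_shift_iterated_general [Finite σ] [DecidableEq σ] {ι : Type*}
    (hps : RealStable p) (hpm : MultiAffine p) (ha : PosAboveRoots p a) (f g : ι → σ)
    (d e : ι → ℝ) (L : List ι) (hde0 : ∀ i ∈ L, 0 ≤ d i + e i)
    (hde : ∀ i ∈ L, (d i + e i) * (potential p (f i) a + potential p (g i) a) ≤ 1)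
    (hq0 : L.foldr (fun i q => pderiv (f i) q + pderiv (g i) q) p ≠ 0) :
    let q := L.foldr (fun i q => pderiv (f i) q + pderiv (g i) q) p
    let b := a - (L.map fun i => Pi.single (f i) (d i) + Pi.single (g i) (e i)).sum
    RealStable q ∧ MultiAffine q ∧ PosAboveRoots q b ∧ ∀ k, potential q k b ≤ potential p k a := by
  induction L with
  | nil => simpa using ⟨hps, hpm, ha⟩
  | cons i L ih =>
    simp only [List.foldr_cons, List.map_cons, List.sum_cons] at hq0 ⊢
    rw [List.forall_mem_cons] at hde0 hde
    set r := L.foldr (fun i q => pderiv (f i) q + pderiv (g i) q) p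
    have hr0 : r ≠ 0 := fun h => hq0 (by simp [h])
    obtain ⟨hrs, hrm, hrb, hrk⟩ := ih hde0.2 hde.2 hr0
    rw [sub_add_eq_sub_sub_swap]
    set b := a - (L.map fun i => Pi.single (f i) (d i) + Pi.single (g i) (e i)).sum
    have hde_b : (d i + e i) * (potential r (f i) b + potential r (g i) b) ≤ 1 :=
      (mul_le_mul_of_nonneg_left (add_le_add (hrk _) (hrk _)) hde0.1).trans hde.1
    exact ⟨hrs.pderiv_add_pderiv hrm _ _ hq0, (hrm.pderiv _).add (hrm.pderiv _),
      hrb.sub_pderiv_add_pderiv hrs hrm hq0 hde0.1 hde_b,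
      fun k => (hrb.potential_sub_pderiv_add_pderiv_le hrs hrm hq0 hde0.1 hde_b k).trans (hrk k)⟩

theorem sum_map_finRange_single_inl_add_single_inr {M : Type*} [AddCommMonoid M] {n : ℕ}
    (δ : Fin n ⊕ Fin n → M) :
    ((List.finRange n).map fun i =>
      (Pi.single (Sum.inl i) (δ (Sum.inl i)) + Pi.single (Sum.inr i) (δ (Sum.inr i)) :
        Fin n ⊕ Fin n → M)).sum = δ := by
  conv_rhs => rw [← Finset.univ_sum_single δ, Fintype.sum_sum_type, ← Finset.sum_add_distrib,
    ← List.sum_ofFn, List.ofFn_eq_map]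

end PotentialShift

/-- Iterated potential shift: for `p` multiaffine real stable in `2n` variables
(indexed by `Fin n ⊕ Fin n`, where `Sum.inl i` plays the role of `zᵢ` and `Sum.inr i`
that of `z_{n+i}`), applying `q = ∏ᵢ (∂ᵢ + ∂_{n+i})` and shifting by admissible `δ`'s
does not increase any potential `Φᵏ`. -/
theorem potential_shift_iterated {n : ℕ} (p : MvPolynomial (Fin n ⊕ Fin n) ℝ)
    (hp0 : p ≠ 0) (hps : RealStable p) (hpm : MultiAffine p)
    (a : Fin n ⊕ Fin n → ℝ) (ha : AboveRoots p a) (hpa : 0 < MvPolynomial.eval a p)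
    (δ : Fin n ⊕ Fin n → ℝ) (hδ0 : ∀ l, 0 ≤ δ l)
    (hpos : ∀ i : Fin n, 0 < MvPolynomial.eval a
      (MvPolynomial.pderiv (Sum.inl i) p + MvPolynomial.pderiv (Sum.inr i) p))
    (hδ : ∀ i : Fin n, δ (Sum.inl i) + δ (Sum.inr i) ≤
      MvPolynomial.eval a p / MvPolynomial.eval a
        (MvPolynomial.pderiv (Sum.inl i) p + MvPolynomial.pderiv (Sum.inr i) p))
    (q : MvPolynomial (Fin n ⊕ Fin n) ℝ)
    (hq : q = (List.finRange n).foldr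
      (fun i g => MvPolynomial.pderiv (Sum.inl i) g + MvPolynomial.pderiv (Sum.inr i) g) p)
    (hq0 : q ≠ 0) :
    AboveRoots q (a - δ) ∧
      ∀ k : Fin n ⊕ Fin n,
        MvPolynomial.eval (a - δ) (MvPolynomial.pderiv k q) /
            MvPolynomial.eval (a - δ) q ≤
          MvPolynomial.eval a (MvPolynomial.pderiv k p) / MvPolynomial.eval a p := by
  have hpa' := ha.posAboveRoots hpa
  have h := potential_shift_iterated_general hps hpm hpa' Sum.inl Sum.inr (fun i => δ (Sum.inl i))
    (fun i => δ (Sum.inr i)) (List.finRange n) (fun i _ => add_nonneg (hδ0 _) (hδ0 _))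
    (fun i _ => (hpa'.mul_potential_add_potential_le_one_iff _ _ _).2
      ((le_div_iff₀ (hpos i)).1 (hδ i))) (hq ▸ hq0)
  rw [← hq, sum_map_finRange_single_inl_add_single_inr] at h
  exact ⟨h.2.2.1.aboveRoots, h.2.2.2⟩
end

section
/- Let μ be a homogeneous Strongly Rayleigh probability measure on the subsets of [n], with μ supported on nonempty sets, such that the marginal probability of every element i ∈ [n] is at most ε, where 0 < ε ≤ 1. Let A ∈ M_n(ℂ) be a positive semidefinite contraction (0 ≤ A ≤ I) all of whose diagonal entries are at most α ≥ 0. If √α + √ε ≤ 1, then there exists S ⊆ [n] with μ(S) > 0 such that the largest eigenvalue of A(S) is strictly less than 4·ε^{1/4} + α. -/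
open ComplexOrder
/-- the generating polynomial `P_μ = Σ_S μ(S) z^S` of a measure on subsets of `[n]` -/
noncomputable def genPoly {n : ℕ} (μ : Finset (Fin n) → ℝ) : MvPolynomial (Fin n) ℝ :=
  ∑ S : Finset (Fin n), MvPolynomial.C (μ S) * ∏ i ∈ S, MvPolynomial.X i

/-- the principal submatrix `A(S)` -/
def subMat {n : ℕ} (A : Matrix (Fin n) (Fin n) ℂ) (S : Finset (Fin n)) :
    Matrix {x // x ∈ S} {x // x ∈ S} ℂ :=
  A.submatrix Subtype.val Subtype.val

/-!
The sum `∑ S, μ S * det (diag z - A)(S)` arises from the real stable product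
`P_μ(y) * det (diag z - A)` by applying `∏ᵢ (∂/∂yᵢ + ∂/∂zᵢ)` and setting `y = 0`. As in the work of
Marcus, Spielman and Srivastava, the barrier functions `∂ᵢG / G` control how far down a point can
move while staying above the zeros: as long as the sum of the barriers in `yᵢ` and `zᵢ`, times
`δ₁ + δ₂`, is at most `1`, applying the `i`-th factor pays for a step `δ₁` in `yᵢ` and `δ₂` in `zᵢ`
and does not increase the other barriers.

A point above the zeros of `∂G/∂y + ∂G/∂z` is above those of one of the two summands, so the factors
can be replaced one at a time by `∂/∂yᵢ` or `∂/∂zᵢ`. The indices for which `∂/∂yᵢ` was chosen form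
`S`, and at `y = 0` what is left is `μ S` times the characteristic polynomial of `A(S)`.

For a homogeneous `μ` the barriers of `P_μ` at the constant point `t` are the marginals divided by
`t`, hence at most `ε / t`; those of `det (diag z - A)` at a constant point `s > 1` are at most
`1 / (s - s α / (s - 1))`. The bound is trivial unless `4 ε^{1/4} + α ≤ 1`, and then
`s = 1 + ε^{-1/4}` gives it.
-/

open Filter Topology
open scoped ComplexConjugate

section Multiaffine

variable {σ K : Type*} [DecidableEq σ]

theorem coordinatewise_induction [Finite σ] [AddCommGroup K] {P : (σ → K) → Prop} {a w : σ → K}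
    (ha : P a)
    (step : ∀ v i, (∀ k, v k = a k ∨ v k = w k) → P v → P (v + Pi.single i (w i - v i))) :
    P w := by
  cases nonempty_fintype σ
  suffices h : ∀ s : Finset σ, P (s.piecewise w a) by simpa using h Finset.univ
  intro s
  induction s using Finset.induction_on with
  | empty => simpa using ha
  | insert i s hi ih =>
    have hmove : (insert i s).piecewise w a =
        s.piecewise w a + Pi.single i (w i - s.piecewise w a i) := by
      ext k
      rcases eq_or_ne k i with rfl | hk
      · simp
      · simp [hk]
    rw [hmove]
    refine step _ i (fun k => ?_) ih
    by_cases hk : k ∈ s <;> simp [hk]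

section CommRing

variable [CommRing K] {F G : (σ → K) → K}

/-- The partial derivative in the `i`-th variable, encoded as the difference operator with step
`1`: the two agree on multiaffine functions, the only ones to which it is applied. -/
def pdiff (i : σ) : Module.End K ((σ → K) → K) :=
  LinearMap.funLeft K K (fun w => w + Pi.single i 1) - 1

theorem pdiff_apply (i : σ) (F : (σ → K) → K) (w : σ → K) :
    pdiff i F w = F (w + Pi.single i 1) - F w := rfl

theorem pdiff_comm (i j : σ) (F : (σ → K) → K) : pdiff i (pdiff j F) = pdiff j (pdiff i F) := by
  ext w
  simp only [pdiff_apply, add_right_comm w (Pi.single i 1)]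
  ring

theorem pdiff_eq_of_add_single {i : σ} (h : ∀ w, F (w + Pi.single i 1) = F w + G w) :
    pdiff i F = G := by
  ext w
  rw [pdiff_apply, h, add_sub_cancel_left]

/-- A function of several variables that is affine in each variable separately; its slope in the
`i`-th variable is then necessarily `pdiff i F`. -/
def Multiaffine (F : (σ → K) → K) : Prop :=
  ∀ w i t, F (w + Pi.single i t) = F w + t * pdiff i F w

theorem multiaffine_of_add_single {H : σ → (σ → K) → K}
    (h : ∀ w i t, F (w + Pi.single i t) = F w + t * H i w) : Multiaffine F := by
  intro w i t
  rw [h, pdiff_eq_of_add_single fun v => by rw [h v i 1, one_mul]]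

protected theorem Multiaffine.add (hF : Multiaffine F) (hG : Multiaffine G) :
    Multiaffine (F + G) := by
  intro w i t
  simp only [map_add, Pi.add_apply, hF w i t, hG w i t]
  ring

protected theorem Multiaffine.pdiff (hF : Multiaffine F) (i : σ) : Multiaffine (pdiff i F) := by
  intro w j t
  rw [pdiff_comm j i]
  simp only [pdiff_apply i, add_right_comm w (Pi.single j t), hF _ j t]
  ring

theorem Multiaffine.pdiff_self (hF : Multiaffine F) (i : σ) :
    pdiff i (pdiff i F) = 0 := by
  ext w
  have h := hF w i (1 + 1)
  rw [Pi.single_add, ← add_assoc, hF, hF] at h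
  rw [pdiff_apply, Pi.zero_apply]
  linear_combination h

protected theorem Multiaffine.continuous [Finite σ] [TopologicalSpace K] [IsTopologicalRing K]
    (hF : Multiaffine F) : Continuous F := by
  cases nonempty_fintype σ
  suffices h : ∀ (s : Finset σ) (G : (σ → K) → K), Multiaffine G →
      Continuous fun w => G (s.piecewise w 0) by
    simpa using h Finset.univ F hF
  intro s
  induction s using Finset.induction_on with
  | empty => intro G _; simpa using continuous_const
  | insert j s hj ih =>
    intro G hG
    have hmove : ∀ w : σ → K,
        (insert j s).piecewise w 0 = s.piecewise w 0 + Pi.single j (w j) := by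
      intro w
      ext k
      rcases eq_or_ne k j with rfl | hk
      · simp [hj]
      · simp [hk]
    simp only [hmove, hG _ j]
    exact (ih G hG).add ((continuous_apply j).mul (ih _ (hG.pdiff j)))

end CommRing

theorem Multiaffine.eq_zero_of_forall_mem_pi [Finite σ] [Field K] {F : (σ → K) → K}
    (hF : Multiaffine F) {s : σ → Set K} (hs : ∀ i, (s i).Nontrivial)
    (h : ∀ w, (∀ i, w i ∈ s i) → F w = 0) : F = 0 := by
  choose a ha using fun i => (hs i).nonempty
  suffices hP : ∀ w, ∀ G : (σ → K) → K, Multiaffine G → (∀ w, (∀ i, w i ∈ s i) → G w = 0) → G w = 0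
    from funext fun w => hP w F hF h
  refine fun w => coordinatewise_induction (a := a) (w := w)
    (P := fun w => ∀ G : (σ → K) → K, Multiaffine G → (∀ w, (∀ i, w i ∈ s i) → G w = 0) → G w = 0)
    (fun G _ hG => hG a ha) fun v i _ ih G hG hGs => ?_
  rw [hG, ih G hG hGs, ih _ (hG.pdiff i) fun x hx => ?_, mul_zero, add_zero]
  obtain ⟨c, hc, hne⟩ := (hs i).exists_ne (x i)
  have hmove := hG x i (c - x i)
  rw [hGs x hx, hGs _ fun k => ?_, zero_add] at hmove
  · exact (mul_eq_zero.1 hmove.symm).resolve_left (sub_ne_zero.2 hne)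
  · rcases eq_or_ne k i with rfl | hk
    · simpa using hc
    · simpa [hk] using hx k

end Multiaffine

section Stability

variable {σ : Type*} [DecidableEq σ] {F : (σ → ℂ) → ℂ} {G : (σ → ℝ) → ℝ} {w : σ → ℂ}

/-- Stability of a function of several complex variables, usually a polynomial: it has no zero on
the product of the open upper half planes. -/
def Stable (F : (σ → ℂ) → ℂ) : Prop := ∀ w : σ → ℂ, (∀ i, 0 < (w i).im) → F w ≠ 0

theorem im_add_single_pos (hw : ∀ i, 0 < (w i).im) {i : σ} {t : ℂ} (ht : 0 < (w i + t).im)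
    (k : σ) : 0 < ((w + Pi.single i t : σ → ℂ) k).im := by
  rcases eq_or_ne k i with rfl | h
  · simpa using ht
  · simpa [h] using hw k

theorem Stable.im_pdiff_mul_conj_neg (hs : Stable F) (hF : Multiaffine F)
    (hw : ∀ i, 0 < (w i).im) {i : σ} (hi : pdiff i F w ≠ 0) :
    (pdiff i F w * conj (F w)).im < 0 := by
  have hroot : ¬ 0 < (w i + -(F w / pdiff i F w)).im := fun h =>
    hs _ (im_add_single_pos hw h) (by rw [hF]; field_simp; ring)
  have hquot : 0 < (F w / pdiff i F w).im := by
    have := hw i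
    simp only [Complex.add_im, Complex.neg_im] at hroot
    linarith
  have hN := Complex.normSq_pos.2 hi
  rw [Complex.div_im, ← sub_div, div_pos_iff_of_pos_right hN] at hquot
  simp only [Complex.mul_im, Complex.conj_re, Complex.conj_im]
  linarith

theorem Stable.im_pdiff_mul_conj_nonpos (hs : Stable F) (hF : Multiaffine F)
    (hw : ∀ i, 0 < (w i).im) (i : σ) : (pdiff i F w * conj (F w)).im ≤ 0 := by
  by_cases hi : pdiff i F w = 0
  · simp [hi]
  · exact (hs.im_pdiff_mul_conj_neg hF hw hi).le

-- Along `w + s e_j`, the function `Im (∂ᵢF · conj F) ≤ 0` is `Im (s d · conj (F w)) + O(|s|²)`,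
-- where `d = ∂ⱼ∂ᵢF w`, so that `d ≠ 0` would make it positive in some direction.
theorem Stable.pdiff_pdiff_eq_zero (hs : Stable F) (hF : Multiaffine F)
    (hw : ∀ i, 0 < (w i).im) {i : σ} (hi : pdiff i F w = 0) (j : σ) :
    pdiff j (pdiff i F) w = 0 := by
  by_contra hd
  set d := pdiff j (pdiff i F) w
  set c := d * conj (F w)
  have hc : 0 < Complex.normSq c :=
    Complex.normSq_pos.2 (mul_ne_zero hd ((map_ne_zero _).2 (hs w hw)))
  have hsmall : ∀ᶠ η : ℝ in 𝓝[>] 0, 0 < (w j).im + η * c.re ∧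
      0 < 1 + η * (d * conj (pdiff j F w)).im := by
    refine .filter_mono nhdsWithin_le_nhds (.and ?_ ?_)
    · exact (by fun_prop : Continuous fun η : ℝ => (w j).im + η * c.re).continuousAt.eventually
        (lt_mem_nhds (by simpa using hw j))
    · exact (by fun_prop : Continuous fun η : ℝ => 1 + η * (d * conj (pdiff j F w)).im)
        |>.continuousAt.eventually (lt_mem_nhds (by simp))
  obtain ⟨η, ⟨hη, hη'⟩, hη0 : 0 < η⟩ := (hsmall.and self_mem_nhdsWithin).exists
  have hmove := hs.im_pdiff_mul_conj_nonpos hF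
    (im_add_single_pos hw (i := j) (t := η * (Complex.I * conj c)) (by simpa using hη)) i
  have hval : (pdiff i F (w + Pi.single j (η * (Complex.I * conj c))) *
      conj (F (w + Pi.single j (η * (Complex.I * conj c))))).im =
      η * Complex.normSq c * (1 + η * (d * conj (pdiff j F w)).im) := by
    have hcd : conj c = conj d * F w := by simp [c]
    rw [hF.pdiff, hi, hF, hcd, Complex.normSq_apply]
    simp only [c, map_add, map_mul, Complex.conj_ofReal, Complex.conj_I, Complex.conj_conj,
      zero_add, Complex.mul_im, Complex.mul_re, Complex.add_im, Complex.add_re, Complex.neg_im,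
      Complex.neg_re, Complex.conj_re, Complex.conj_im, Complex.ofReal_re, Complex.ofReal_im,
      Complex.I_re, Complex.I_im]
    ring
  rw [hval] at hmove
  exact hmove.not_gt (by positivity)

theorem Stable.pdiff_eq_zero [Finite σ] (hs : Stable F) (hF : Multiaffine F)
    (hw : ∀ i, 0 < (w i).im) {i : σ} (hi : pdiff i F w = 0) : pdiff i F = 0 := by
  refine (hF.pdiff i).eq_zero_of_forall_mem_pi (s := fun _ => {z | 0 < z.im})
    (fun _ => ⟨Complex.I, by simp, 2 * Complex.I, by simp, by simp [Complex.ext_iff]⟩)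
    fun v hv => ?_
  refine coordinatewise_induction (P := fun v => pdiff i F v = 0) hi fun x k hx ih => ?_
  have hx' : ∀ l, 0 < (x l).im := fun l => by
    rcases hx l with h | h <;> rw [h]
    exacts [hw l, hv l]
  rw [hF.pdiff, ih, hs.pdiff_pdiff_eq_zero hF hx' ih, mul_zero, add_zero]

theorem Stable.pdiff_eq_zero_or_stable [Finite σ] (hs : Stable F) (hF : Multiaffine F) (i : σ) :
    pdiff i F = 0 ∨ Stable (pdiff i F) := by
  by_contra! h
  simp only [Stable, not_forall, not_not] at h
  obtain ⟨hne, w, hw, hw0⟩ := h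
  exact hne (hs.pdiff_eq_zero hF hw hw0)

theorem Stable.pdiff_add_pdiff_eq_zero_or_stable [Finite σ] (hs : Stable F) (hF : Multiaffine F)
    (i j : σ) : pdiff i F + pdiff j F = 0 ∨ Stable (pdiff i F + pdiff j F) := by
  rcases hs.pdiff_eq_zero_or_stable hF i with hi | hi
  · simpa [hi] using hs.pdiff_eq_zero_or_stable hF j
  rcases hs.pdiff_eq_zero_or_stable hF j with hj | hj
  · simpa [hj] using Or.inr hi
  refine Or.inr fun w hw h0 => ?_
  have hsum := congrArg (fun z => (z * conj (F w)).im) h0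
  simp only [Pi.add_apply, add_mul, Complex.add_im, zero_mul, Complex.zero_im] at hsum
  linarith [hs.im_pdiff_mul_conj_neg hF hw (hi w hw), hs.im_pdiff_mul_conj_neg hF hw (hj w hw)]

/-- `G` is the restriction to real arguments of the multiaffine function `F`, which is stable
or zero. -/
structure IsStableExtension (F : (σ → ℂ) → ℂ) (G : (σ → ℝ) → ℝ) : Prop where
  multiaffine : Multiaffine F
  ofReal : ∀ w : σ → ℝ, F (fun i => (w i : ℂ)) = G w
  eq_zero_or_stable : F = 0 ∨ Stable F

/-- Real multiaffine functions that are real stable or zero. Zero is included because partial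
derivatives may vanish. -/
def StableMultiaffine (G : (σ → ℝ) → ℝ) : Prop := ∃ F, IsStableExtension F G

theorem ofReal_add_single (w : σ → ℝ) (i : σ) (t : ℝ) :
    (fun k => (((w + Pi.single i t : σ → ℝ) k : ℝ) : ℂ)) =
      (fun k => (w k : ℂ)) + Pi.single i (t : ℂ) := by
  ext k
  rcases eq_or_ne k i with rfl | h
  · simp
  · simp [h]

theorem ofReal_pdiff (h : ∀ w : σ → ℝ, F (fun k => (w k : ℂ)) = G w) (i : σ) (w : σ → ℝ) :
    pdiff i F (fun k => (w k : ℂ)) = pdiff i G w := by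
  have hmove := ofReal_add_single w i 1
  rw [Complex.ofReal_one] at hmove
  simp only [pdiff_apply, Complex.ofReal_sub, ← h, hmove]

protected theorem IsStableExtension.pdiff [Finite σ] (h : IsStableExtension F G) (i : σ) :
    IsStableExtension (pdiff i F) (pdiff i G) where
  multiaffine := h.multiaffine.pdiff i
  ofReal := ofReal_pdiff h.ofReal i
  eq_zero_or_stable := by
    rcases h.eq_zero_or_stable with rfl | hs
    · exact .inl (map_zero _)
    · exact hs.pdiff_eq_zero_or_stable h.multiaffine i

protected theorem IsStableExtension.pdiff_add_pdiff [Finite σ] (h : IsStableExtension F G)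
    (i j : σ) : IsStableExtension (pdiff i F + pdiff j F) (pdiff i G + pdiff j G) where
  multiaffine := (h.multiaffine.pdiff i).add (h.multiaffine.pdiff j)
  ofReal w := by simp [ofReal_pdiff h.ofReal]
  eq_zero_or_stable := by
    rcases h.eq_zero_or_stable with rfl | hs
    · exact .inl (by simp)
    · exact hs.pdiff_add_pdiff_eq_zero_or_stable h.multiaffine i j

theorem StableMultiaffine.multiaffine (h : StableMultiaffine G) : Multiaffine G := by
  obtain ⟨F, hF⟩ := h
  intro w i t
  have hmove := hF.multiaffine (fun k => (w k : ℂ)) i t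
  rw [← ofReal_add_single, hF.ofReal, hF.ofReal, ofReal_pdiff hF.ofReal] at hmove
  exact_mod_cast hmove

protected theorem StableMultiaffine.pdiff [Finite σ] (h : StableMultiaffine G) (i : σ) :
    StableMultiaffine (pdiff i G) :=
  let ⟨_, hF⟩ := h
  ⟨_, hF.pdiff i⟩

protected theorem StableMultiaffine.pdiff_add_pdiff [Finite σ] (h : StableMultiaffine G)
    (i j : σ) : StableMultiaffine (pdiff i G + pdiff j G) :=
  let ⟨_, hF⟩ := h
  ⟨_, hF.pdiff_add_pdiff i j⟩

theorem Stable.im_pdiff_mul_conj_nonpos_of_real [Finite σ] (hs : Stable F) (hF : Multiaffine F)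
    (i j : σ) (w : σ → ℝ) :
    (pdiff j F ((fun k => (w k : ℂ)) + Pi.single i Complex.I) *
      conj (F ((fun k => (w k : ℂ)) + Pi.single i Complex.I))).im ≤ 0 := by
  set u : ℝ → σ → ℂ := fun η => (fun k => (w k : ℂ) + η * Complex.I) + Pi.single i Complex.I
  have hu : Continuous u := by fun_prop
  have hFu : Continuous fun η => F (u η) := hF.continuous.comp hu
  have hpu : Continuous fun η => pdiff j F (u η) := (hF.pdiff j).continuous.comp hu
  have hlim : Tendsto (fun η => (pdiff j F (u η) * conj (F (u η))).im) (𝓝[>] 0)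
      (𝓝 (pdiff j F (u 0) * conj (F (u 0))).im) :=
    (Complex.continuous_im.comp (hpu.mul (Complex.continuous_conj.comp hFu)))
      |>.continuousAt.mono_left nhdsWithin_le_nhds
  have hmem : ∀ᶠ η in 𝓝[>] 0, (pdiff j F (u η) * conj (F (u η))).im ≤ 0 := by
    filter_upwards [self_mem_nhdsWithin] with η (hη : 0 < η)
    exact hs.im_pdiff_mul_conj_nonpos hF
      (im_add_single_pos (fun _ => by simpa using hη) (by simpa using by linarith)) j
  simpa [u] using le_of_tendsto hlim hmem

-- The imaginary part of `∂ⱼG(w + ieᵢ) · conj (G(w + ieᵢ))` is the difference of the two sides.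
theorem StableMultiaffine.rayleigh [Finite σ] (h : StableMultiaffine G) (i j : σ) (w : σ → ℝ) :
    G w * pdiff i (pdiff j G) w ≤ pdiff i G w * pdiff j G w := by
  obtain ⟨F, hF⟩ := h
  rcases hF.eq_zero_or_stable with rfl | hs
  · have hG : G = 0 := by
      ext v
      simpa using (hF.ofReal v).symm
    simp [hG]
  have hval (a b c d : ℝ) :
      ((c + Complex.I * d) * conj (a + Complex.I * b : ℂ)).im = a * d - b * c := by
    simp only [map_add, map_mul, Complex.conj_ofReal, Complex.conj_I, Complex.mul_im,
      Complex.mul_re, Complex.add_im, Complex.add_re, Complex.neg_im, Complex.neg_re,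
      Complex.ofReal_re, Complex.ofReal_im, Complex.I_re, Complex.I_im]
    ring
  have him := hs.im_pdiff_mul_conj_nonpos_of_real hF.multiaffine i j w
  rw [hF.multiaffine, hF.multiaffine.pdiff, hF.ofReal, ofReal_pdiff hF.ofReal,
    ofReal_pdiff hF.ofReal, ofReal_pdiff (ofReal_pdiff hF.ofReal j)] at him
  linarith [hval (G w) (pdiff i G w) (pdiff j G w) (pdiff i (pdiff j G) w)]

end Stability

section Barrier

variable {σ : Type*} {G : (σ → ℝ) → ℝ} {a b : σ → ℝ}

/-- Positivity on the orthant with apex `a`: for a stable polynomial, `a` lies above its zeros. -/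
def PositiveAbove (G : (σ → ℝ) → ℝ) (a : σ → ℝ) : Prop := ∀ w, a ≤ w → 0 < G w

/-- Nonnegativity on the orthant with apex `a`. -/
def NonnegAbove (G : (σ → ℝ) → ℝ) (a : σ → ℝ) : Prop := ∀ w, a ≤ w → 0 ≤ G w

theorem PositiveAbove.nonnegAbove (h : PositiveAbove G a) : NonnegAbove G a :=
  fun w hw => (h w hw).le

theorem PositiveAbove.mono (h : PositiveAbove G a) (hab : a ≤ b) : PositiveAbove G b :=
  fun w hw => h w (hab.trans hw)

variable [DecidableEq σ]

theorem le_add_single (w : σ → ℝ) (i : σ) {t : ℝ} (ht : 0 ≤ t) : w ≤ w + Pi.single i t :=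
  le_add_of_nonneg_right (Pi.single_nonneg.2 ht)

protected theorem NonnegAbove.pdiff (h : NonnegAbove G a) (hG : Multiaffine G) (i : σ) :
    NonnegAbove (pdiff i G) a := by
  intro w hw
  by_contra! hlt
  have hGw := h w hw
  have ht : 0 ≤ (G w + 1) / -pdiff i G w := by
    apply div_nonneg <;> linarith
  have hmove := h _ (hw.trans (le_add_single w i ht))
  rw [hG, div_neg, neg_mul, div_mul_cancel₀ _ hlt.ne] at hmove
  linarith

theorem antitoneOn_Ici_of_coordinate_steps [Finite σ] {φ : (σ → ℝ) → ℝ}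
    (h : ∀ v, a ≤ v → ∀ i t, 0 ≤ t → φ (v + Pi.single i t) ≤ φ v) :
    AntitoneOn φ (Set.Ici a) := by
  intro v (hv : a ≤ v) w _ hvw
  refine coordinatewise_induction (P := fun x => φ x ≤ φ v) le_rfl fun x i hx ih => ?_
  have hle : v ≤ x ∧ x i ≤ w i :=
    ⟨fun k => by rcases hx k with h | h <;> simp [h, hvw k],
      by rcases hx i with h | h <;> simp [h, hvw i]⟩
  exact (h x (hv.trans hle.1) i _ (sub_nonneg.2 hle.2)).trans ih

/-- The barrier function `∂ᵢG / G` of Marcus, Spielman and Srivastava. -/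
noncomputable def barrier (i : σ) (G : (σ → ℝ) → ℝ) (a : σ → ℝ) : ℝ := pdiff i G a / G a

theorem StableMultiaffine.barrier_add_single_le [Finite σ] (hG : StableMultiaffine G)
    {v : σ → ℝ} {i j : σ} {t : ℝ} (ht : 0 ≤ t) (h : 0 < G v * G (v + Pi.single j t)) :
    barrier i G (v + Pi.single j t) ≤ barrier i G v := by
  rw [barrier, barrier, ← sub_nonneg,
    div_sub_div _ _ (left_ne_zero_of_mul h.ne') (right_ne_zero_of_mul h.ne')]
  refine div_nonneg ?_ h.le
  rw [hG.multiaffine, hG.multiaffine.pdiff]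
  linarith [mul_le_mul_of_nonneg_left (hG.rayleigh j i v) ht]

theorem PositiveAbove.barrier_antitoneOn [Finite σ] (h : PositiveAbove G a)
    (hG : StableMultiaffine G) (i : σ) : AntitoneOn (barrier i G) (Set.Ici a) :=
  antitoneOn_Ici_of_coordinate_steps fun v hv _ _ ht =>
    hG.barrier_add_single_le ht (mul_pos (h v hv) (h _ (hv.trans (le_add_single v _ ht))))

theorem PositiveAbove.pdiff_eq_zero [Finite σ] (h : PositiveAbove G a) (hG : StableMultiaffine G)
    {i : σ} (hi : pdiff i G a = 0) : pdiff i G = 0 := by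
  refine (hG.multiaffine.pdiff i).eq_zero_of_forall_mem_pi (s := fun k => Set.Ici (a k))
    (fun k => ⟨a k, Set.self_mem_Ici, a k + 1, by simp, by simp⟩) fun w hw => ?_
  have hanti := h.barrier_antitoneOn hG i Set.self_mem_Ici hw hw
  rw [barrier, barrier, hi, zero_div, div_le_iff₀ (h w hw), zero_mul] at hanti
  exact hanti.antisymm (h.nonnegAbove.pdiff hG.multiaffine i w hw)

-- The hypothesis makes a quadratic in `U` nonnegative, so its discriminant is nonpositive.
theorem mul_sub_le_of_rayleigh_line {p f g h p' f' g' h' : ℝ}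
    (hR : ∀ U : ℝ, (p + U * p') * (h + U * h') ≤ (f + U * f') * (g + U * g'))
    (hp : 0 < p) (hf : 0 ≤ f) (hg : 0 ≤ g) (hh : 0 ≤ h)
    (hA : p * f' ≤ f * p') (hB : p * g' ≤ g * p') :
    p * (h * p' - p * h') ≤ (f + g) * ((f * p' - p * f') + (g * p' - p * g')) := by
  set A := f * p' - p * f'
  set B := g * p' - p * g'
  set K := h * p' - p * h'
  have hA : 0 ≤ A := sub_nonneg.2 hA
  have hB : 0 ≤ B := sub_nonneg.2 hB
  have hdiscrim : discrim (f' * g' - p' * h') (f * g' + f' * g - p * h' - p' * h)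
      (f * g - p * h) ≤ 0 :=
    discrim_le_zero fun U => by linarith [hR U]
  have hsq : (f * B + g * A - p * K) ^ 2 - 4 * (f * g - p * h) * (A * B) = p ^ 2 *
      discrim (f' * g' - p' * h') (f * g' + f' * g - p * h' - p' * h) (f * g - p * h) := by
    simp only [discrim, A, B, K]
    ring
  have hle : (f * B + g * A - p * K) ^ 2 ≤ (f * A + g * B) ^ 2 := by
    have hphAB : 0 ≤ p * h * (A * B) := mul_nonneg (mul_nonneg hp.le hh) (mul_nonneg hA hB)
    have hneg := mul_nonpos_of_nonneg_of_nonpos (sq_nonneg p) hdiscrim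
    linarith [sq_nonneg (f * A - g * B)]
  linarith [neg_le_of_abs_le (abs_le_of_sq_le_sq hle
    (add_nonneg (mul_nonneg hf hA) (mul_nonneg hg hB)))]

theorem Multiaffine.pdiff_add_pdiff_sub_single (hG : Multiaffine G) (y z : σ) (w : σ → ℝ)
    (δ₁ δ₂ : ℝ) :
    (pdiff y G + pdiff z G) (w - (Pi.single y δ₁ + Pi.single z δ₂)) =
      pdiff y G w + pdiff z G w - (δ₁ + δ₂) * pdiff y (pdiff z G) w := by
  have hmove : w - (Pi.single y δ₁ + Pi.single z δ₂) =
      w + Pi.single y (-δ₁) + Pi.single z (-δ₂) := by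
    simp only [Pi.single_neg]
    abel
  rw [hmove, Pi.add_apply, hG.pdiff y, hG.pdiff y, (hG.pdiff y).pdiff z, hG.pdiff z, hG.pdiff z,
    (hG.pdiff z).pdiff z, pdiff_comm y z (pdiff y G), pdiff_comm z y G]
  simp only [hG.pdiff_self, map_zero, Pi.zero_apply]
  ring

theorem PositiveAbove.pdiff_add_pdiff_pos [Finite σ] (ha : PositiveAbove G a)
    (hG : StableMultiaffine G) {y z : σ} (hq : pdiff y G + pdiff z G ≠ 0) :
    0 < pdiff y G a + pdiff z G a := by
  have hy := ha.nonnegAbove.pdiff hG.multiaffine y a le_rfl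
  have hz := ha.nonnegAbove.pdiff hG.multiaffine z a le_rfl
  refine (add_nonneg hy hz).lt_of_ne' fun h0 => hq ?_
  rw [ha.pdiff_eq_zero hG (i := y) (by linarith), ha.pdiff_eq_zero hG (i := z) (by linarith),
    add_zero]

theorem PositiveAbove.pdiff_add_pdiff [Finite σ] (ha : PositiveAbove G a)
    (hG : StableMultiaffine G) {y z : σ} {δ₁ δ₂ : ℝ} (hδ : 0 ≤ δ₁ + δ₂)
    (hb : (barrier y G a + barrier z G a) * (δ₁ + δ₂) ≤ 1) (hq : pdiff y G + pdiff z G ≠ 0) :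
    PositiveAbove (pdiff y G + pdiff z G) (a - (Pi.single y δ₁ + Pi.single z δ₂)) := by
  intro v hv
  obtain ⟨w, rfl⟩ : ∃ w, v = w - (Pi.single y δ₁ + Pi.single z δ₂) :=
    ⟨_, (add_sub_cancel_right v _).symm⟩
  have hw : a ≤ w := by simpa using hv
  rw [hG.multiaffine.pdiff_add_pdiff_sub_single, sub_pos]
  have hf := ha.nonnegAbove.pdiff hG.multiaffine y w hw
  have hg := ha.nonnegAbove.pdiff hG.multiaffine z w hw
  have hh := (ha.nonnegAbove.pdiff hG.multiaffine z).pdiff (hG.multiaffine.pdiff z) y w hw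
  have hsum := (ha.mono hw).pdiff_add_pdiff_pos hG hq
  have hbw : (pdiff y G w + pdiff z G w) * (δ₁ + δ₂) ≤ G w := by
    have hanti : barrier y G w + barrier z G w ≤ barrier y G a + barrier z G a :=
      add_le_add (ha.barrier_antitoneOn hG y Set.self_mem_Ici hw hw)
        (ha.barrier_antitoneOn hG z Set.self_mem_Ici hw hw)
    have h := (mul_le_mul_of_nonneg_right hanti hδ).trans hb
    rwa [barrier, barrier, ← add_div, div_mul_eq_mul_div, div_le_one (ha w hw)] at h
  refine lt_of_mul_lt_mul_right ?_ hsum.le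
  calc (δ₁ + δ₂) * pdiff y (pdiff z G) w * (pdiff y G w + pdiff z G w)
      = (pdiff y G w + pdiff z G w) * (δ₁ + δ₂) * pdiff y (pdiff z G) w := by ring
    _ ≤ G w * pdiff y (pdiff z G) w := mul_le_mul_of_nonneg_right hbw hh
    _ ≤ pdiff y G w * pdiff z G w := hG.rayleigh y z w
    _ < (pdiff y G w + pdiff z G w) * (pdiff y G w + pdiff z G w) := by
      nlinarith [mul_pos hsum hsum, mul_nonneg hf hg]

theorem PositiveAbove.barrier_pdiff_add_pdiff_le [Finite σ] (ha : PositiveAbove G a)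
    (hG : StableMultiaffine G) {y z : σ} {δ₁ δ₂ : ℝ} (hδ : 0 ≤ δ₁ + δ₂)
    (hb : (barrier y G a + barrier z G a) * (δ₁ + δ₂) ≤ 1) (hq : pdiff y G + pdiff z G ≠ 0)
    (u : σ) :
    barrier u (pdiff y G + pdiff z G) (a - (Pi.single y δ₁ + Pi.single z δ₂)) ≤
      barrier u G a := by
  have hm := hG.multiaffine
  have hpa := ha a le_rfl
  have hp := ha.pdiff_add_pdiff hG hδ hb hq _ le_rfl
  rw [barrier, barrier, div_le_div_iff₀ hp hpa, map_add, pdiff_comm u y, pdiff_comm u z,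
    (hm.pdiff u).pdiff_add_pdiff_sub_single, hm.pdiff_add_pdiff_sub_single, pdiff_comm z u,
    pdiff_comm y u, pdiff_comm y u]
  have hA := hG.rayleigh u y a
  have hB := hG.rayleigh u z a
  have key := mul_sub_le_of_rayleigh_line (p := G a) (f := pdiff y G a) (g := pdiff z G a)
    (h := pdiff y (pdiff z G) a) (p' := pdiff u G a) (f' := pdiff u (pdiff y G) a)
    (g' := pdiff u (pdiff z G) a) (h' := pdiff u (pdiff y (pdiff z G)) a)
    (fun U => by
      have h := hG.rayleigh y z (a + Pi.single u U)
      rwa [hm, hm.pdiff y, hm.pdiff z, (hm.pdiff z).pdiff y] at h)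
    hpa (ha.nonnegAbove.pdiff hm y a le_rfl) (ha.nonnegAbove.pdiff hm z a le_rfl)
    ((ha.nonnegAbove.pdiff hm z).pdiff (hm.pdiff z) y a le_rfl) (by linarith) (by linarith)
  rw [barrier, barrier, ← add_div, div_mul_eq_mul_div, div_le_one hpa] at hb
  set f := pdiff y G a
  set g := pdiff z G a
  set h := pdiff y (pdiff z G) a
  set p' := pdiff u G a
  set f' := pdiff u (pdiff y G) a
  set g' := pdiff u (pdiff z G) a
  set h' := pdiff u (pdiff y (pdiff z G)) a
  have hAB : 0 ≤ (f * p' - G a * f') + (g * p' - G a * g') := by linarith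
  have hscaled : G a * ((δ₁ + δ₂) * (h * p' - G a * h')) ≤
      G a * ((f * p' - G a * f') + (g * p' - G a * g')) := by
    linarith [mul_le_mul_of_nonneg_right hb hAB, mul_le_mul_of_nonneg_right key hδ]
  linarith [le_of_mul_le_mul_left hscaled hpa]

end Barrier

section Splitting

variable {σ : Type*} [DecidableEq σ] [Finite σ] {p : (σ → ℝ) → ℝ} {b v w : σ → ℝ} {y z : σ}

theorem StableMultiaffine.div_monotoneOn (hp : StableMultiaffine p)
    (hq : PositiveAbove (pdiff y p + pdiff z p) b) :
    MonotoneOn (fun w => p w / (pdiff y p + pdiff z p) w) (Set.Ici b) := by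
  have hqm := (hp.multiaffine.pdiff y).add (hp.multiaffine.pdiff z)
  suffices h : AntitoneOn (fun w => -(p w / (pdiff y p + pdiff z p) w)) (Set.Ici b) by
    simpa using h.neg
  refine antitoneOn_Ici_of_coordinate_steps fun x hx i t ht => ?_
  have hmove := hx.trans (le_add_single x i ht)
  rw [neg_le_neg_iff, div_le_div_iff₀ (hq _ hx) (hq _ hmove), hp.multiaffine, hqm, map_add]
  have hy := mul_le_mul_of_nonneg_left (hp.rayleigh i y x) ht
  have hz := mul_le_mul_of_nonneg_left (hp.rayleigh i z x) ht
  simp only [Pi.add_apply]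
  linarith

theorem StableMultiaffine.nonneg_of_le (hp : StableMultiaffine p)
    (hq : PositiveAbove (pdiff y p + pdiff z p) b) (hv : b ≤ v) (hvw : v ≤ w) (h : 0 ≤ p v) :
    0 ≤ p w := by
  have hdiv := hp.div_monotoneOn hq hv (hv.trans hvw) hvw
  have hnn := (div_nonneg h (hq v hv).le).trans hdiv
  rwa [le_div_iff₀ (hq w (hv.trans hvw)), zero_mul] at hnn

theorem StableMultiaffine.pos_of_le (hp : StableMultiaffine p)
    (hq : PositiveAbove (pdiff y p + pdiff z p) b) (hv : b ≤ v) (hvw : v ≤ w) (h : 0 < p v) :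
    0 < p w := by
  have hdiv := hp.div_monotoneOn hq hv (hv.trans hvw) hvw
  have hpos := (div_pos h (hq v hv)).trans_le hdiv
  rwa [lt_div_iff₀ (hq w (hv.trans hvw)), zero_mul] at hpos

theorem StableMultiaffine.pdiff_nonpos_step (hp : StableMultiaffine p)
    (hq : PositiveAbove (pdiff y p + pdiff z p) b) (hv : b ≤ v) {k : σ} {t : ℝ} (ht : 0 ≤ t)
    (hle : p (v + Pi.single k t) ≤ 0) (hyle : pdiff y p (v + Pi.single k t) ≤ 0) :
    pdiff y p v ≤ 0 := by
  have hmove := le_add_single v k ht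
  rcases hle.lt_or_eq with hneg | hzero
  · have hpv : p v < 0 := lt_of_not_ge fun h => (hp.nonneg_of_le hq hv hmove h).not_gt hneg
    have hbar := hp.barrier_add_single_le (i := y) ht (mul_pos_of_neg_of_neg hpv hneg)
    have hnn : 0 ≤ barrier y p v := (div_nonneg_of_nonpos hyle hle).trans hbar
    rwa [barrier, le_div_iff_of_neg hpv, zero_mul] at hnn
  · have habove : NonnegAbove p (v + Pi.single k t) := fun x hx =>
      hp.nonneg_of_le hq (hv.trans hmove) hx hzero.ge
    have hyk := (habove.pdiff hp.multiaffine y).pdiff (hp.multiaffine.pdiff y) k _ le_rfl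
    have hback := hp.multiaffine.pdiff y (v + Pi.single k t) k (-t)
    rw [Pi.single_neg, add_neg_cancel_right] at hback
    linarith [mul_nonneg ht hyk]

theorem StableMultiaffine.pdiff_nonpos_of_le (hp : StableMultiaffine p)
    (hq : PositiveAbove (pdiff y p + pdiff z p) b) (hw : b ≤ w) (h : pdiff y p w ≤ 0) :
    pdiff y p b ≤ 0 := by
  rcases lt_or_ge 0 (p w) with hpos | hneg
  · have habove : PositiveAbove p w := fun x hx => hp.pos_of_le hq hw hx hpos
    have hzero := habove.pdiff_eq_zero hp
      (h.antisymm (habove.nonnegAbove.pdiff hp.multiaffine y w le_rfl))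
    simp [hzero]
  · suffices hP : p b ≤ 0 ∧ pdiff y p b ≤ 0 from hP.2
    refine coordinatewise_induction (P := fun x => p x ≤ 0 ∧ pdiff y p x ≤ 0) ⟨hneg, h⟩
      fun x i hx ih => ?_
    set v := x + Pi.single i (b i - x i)
    have hxv : x = v + Pi.single i (x i - b i) := by
      rw [add_assoc, ← Pi.single_add]
      simp
    have hbv : b ≤ v := fun k => by
      rcases eq_or_ne k i with rfl | hk
      · simp [v]
      · rcases hx k with h | h <;> simp [v, hk, h, hw k]
    have ht : 0 ≤ x i - b i := sub_nonneg.2 (by rcases hx i with h | h <;> simp [h, hw i])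
    rw [hxv] at ih
    refine ⟨?_, hp.pdiff_nonpos_step hq hbv ht ih.1 ih.2⟩
    exact le_of_not_gt fun hv =>
      (hp.pos_of_le hq hbv (le_add_single v i ht) hv).not_ge ih.1

theorem StableMultiaffine.positiveAbove_pdiff_or (hp : StableMultiaffine p)
    (hq : PositiveAbove (pdiff y p + pdiff z p) b) :
    PositiveAbove (pdiff y p) b ∨ PositiveAbove (pdiff z p) b := by
  by_contra! h
  simp only [PositiveAbove, not_forall, not_lt] at h
  obtain ⟨⟨v, hv, hyv⟩, w, hw, hzw⟩ := h
  have hyb := hp.pdiff_nonpos_of_le hq hv hyv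
  have hzb := hp.pdiff_nonpos_of_le (add_comm (pdiff y p) _ ▸ hq) hw hzw
  exact (add_nonpos hyb hzb).not_gt (hq b le_rfl)

end Splitting

section PairSum

variable {ι σ : Type*} [DecidableEq σ]

section CommRing

variable {K : Type*} [CommRing K] {y z : ι → σ} {s : Finset ι} {i : ι}

theorem pdiff_commute (i j : σ) : Commute (pdiff i : Module.End K ((σ → K) → K)) (pdiff j) :=
  LinearMap.ext (pdiff_comm i j)

theorem pairwise_commute_pdiff_add_pdiff (y z : ι → σ) (s : Set ι) :
    s.Pairwise (Function.onFun Commute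
      fun i => (pdiff (y i) + pdiff (z i) : Module.End K ((σ → K) → K))) :=
  fun _ _ _ _ _ => .add_left (.add_right (pdiff_commute _ _) (pdiff_commute _ _))
    (.add_right (pdiff_commute _ _) (pdiff_commute _ _))

/-- The differential operator `∏_{i ∈ s} (∂/∂y_i + ∂/∂z_i)`. -/
def pairSum (y z : ι → σ) (s : Finset ι) : Module.End K ((σ → K) → K) :=
  s.noncommProd (fun i => pdiff (y i) + pdiff (z i)) (pairwise_commute_pdiff_add_pdiff y z s)

theorem pairSum_empty : (pairSum y z ∅ : Module.End K ((σ → K) → K)) = 1 :=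
  Finset.noncommProd_empty _ _

theorem pairSum_insert [DecidableEq ι] (hi : i ∉ s) (G : (σ → K) → K) :
    pairSum y z (insert i s) G =
      pdiff (y i) (pairSum y z s G) + pdiff (z i) (pairSum y z s G) := by
  rw [pairSum, Finset.noncommProd_insert_of_notMem _ _ _ _ hi]
  rfl

theorem pdiff_pairSum (j : σ) (G : (σ → K) → K) :
    pdiff j (pairSum y z s G) = pairSum y z s (pdiff j G) :=
  LinearMap.congr_fun (Finset.noncommProd_commute s _ _ (pdiff j) fun i _ =>
    (pdiff_commute j (y i)).add_right (pdiff_commute j (z i))) G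

/-- `F T U` is the partial derivative of `F ∅ ∅` in the variables `y i` with `i ∈ T` and `z i`
with `i ∈ U`. -/
structure IsPartialFamily [DecidableEq ι] (y z : ι → σ)
    (F : Finset ι → Finset ι → (σ → K) → K) : Prop where
  pdiff_left : ∀ {T U : Finset ι} {i}, i ∉ T → pdiff (y i) (F T U) = F (insert i T) U
  pdiff_right : ∀ {T U : Finset ι} {i}, i ∉ U → pdiff (z i) (F T U) = F T (insert i U)

theorem IsPartialFamily.induction [DecidableEq ι] {F : Finset ι → Finset ι → (σ → K) → K}
    (h : IsPartialFamily y z F) {P : ((σ → K) → K) → Prop} (h0 : P (F ∅ ∅))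
    (hP : ∀ G i, P G → P (pdiff i G)) (T U : Finset ι) : P (F T U) := by
  induction U using Finset.induction_on with
  | empty =>
    induction T using Finset.induction_on with
    | empty => exact h0
    | insert i T hi ih => exact h.pdiff_left hi ▸ hP _ _ ih
  | insert i U hi ih => exact h.pdiff_right hi ▸ hP _ _ ih

end CommRing

variable {y z : ι → σ} {G : (σ → ℝ) → ℝ} {a b : σ → ℝ}

protected theorem StableMultiaffine.pairSum [Finite σ] (hG : StableMultiaffine G) (s : Finset ι) :
    StableMultiaffine (pairSum y z s G) := by
  classical
  induction s using Finset.induction_on with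
  | empty => rwa [pairSum_empty]
  | insert i s hi ih => exact pairSum_insert hi G ▸ ih.pdiff_add_pdiff (y i) (z i)

protected theorem PositiveAbove.pairSum [Finite σ] (ha : PositiveAbove G a)
    (hG : StableMultiaffine G) {s : Finset ι} {δ₁ δ₂ : ℝ} (hδ : 0 ≤ δ₁ + δ₂)
    (hb : ∀ i ∈ s, (barrier (y i) G a + barrier (z i) G a) * (δ₁ + δ₂) ≤ 1)
    (hq : pairSum y z s G ≠ 0) :
    PositiveAbove (pairSum y z s G)
        (a - ∑ i ∈ s, (Pi.single (y i) δ₁ + Pi.single (z i) δ₂)) ∧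
      ∀ u, barrier u (pairSum y z s G)
        (a - ∑ i ∈ s, (Pi.single (y i) δ₁ + Pi.single (z i) δ₂)) ≤ barrier u G a := by
  classical
  induction s using Finset.induction_on with
  | empty => simpa [pairSum_empty] using ha
  | insert i s hi ih =>
    rw [pairSum_insert hi] at hq
    obtain ⟨hpos, hbar⟩ := ih (fun j hj => hb j (Finset.mem_insert_of_mem hj))
      fun h => hq (by rw [h, map_zero, map_zero, add_zero])
    have hbi := (mul_le_mul_of_nonneg_right (add_le_add (hbar (y i)) (hbar (z i))) hδ).trans
      (hb i (Finset.mem_insert_self i s))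
    rw [pairSum_insert hi, Finset.sum_insert hi, add_comm _ (∑ _ ∈ s, _), ← sub_sub]
    exact ⟨hpos.pdiff_add_pdiff (hG.pairSum s) hδ hbi hq, fun u =>
      (hpos.barrier_pdiff_add_pdiff_le (hG.pairSum s) hδ hbi hq u).trans (hbar u)⟩

protected theorem NonnegAbove.pairSum (hG : NonnegAbove G a) (hm : Multiaffine G) (s : Finset ι) :
    NonnegAbove (pairSum y z s G) a := by
  suffices h : Multiaffine (pairSum y z s G) ∧ NonnegAbove (pairSum y z s G) a from
    h.2
  classical
  induction s using Finset.induction_on with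
  | empty => simpa [pairSum_empty] using ⟨hm, hG⟩
  | insert i s hi ih =>
    rw [pairSum_insert hi]
    exact ⟨(ih.1.pdiff _).add (ih.1.pdiff _), fun w hw =>
      add_nonneg (ih.2.pdiff ih.1 _ w hw) (ih.2.pdiff ih.1 _ w hw)⟩

variable [DecidableEq ι] {F : Finset ι → Finset ι → (σ → ℝ) → ℝ}

theorem IsPartialFamily.pairSum_pos (hF : IsPartialFamily y z F) (hm : Multiaffine (F ∅ ∅))
    (ha : NonnegAbove (F ∅ ∅) a) {s U : Finset ι} (hU : Disjoint s U) (h : 0 < F ∅ (U ∪ s) a) :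
    0 < pairSum y z s (F ∅ U) a := by
  induction s using Finset.induction_on generalizing U with
  | empty => simpa [pairSum_empty] using h
  | insert i s hi ih =>
    obtain ⟨hiU, hsU⟩ := Finset.disjoint_insert_left.1 hU
    obtain ⟨hmU, haU⟩ := hF.induction (P := fun G => Multiaffine G ∧ NonnegAbove G a) ⟨hm, ha⟩
      (fun G j hG => ⟨hG.1.pdiff j, hG.2.pdiff hG.1 j⟩) ∅ U
    rw [pairSum_insert hi, pdiff_pairSum, pdiff_pairSum, hF.pdiff_right hiU]
    refine add_pos_of_nonneg_of_pos ((haU.pdiff hmU (y i)).pairSum (hmU.pdiff _) s a le_rfl)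
      (ih (Finset.disjoint_insert_right.2 ⟨hi, hsU⟩) ?_)
    rwa [Finset.insert_union, ← Finset.union_insert]

theorem IsPartialFamily.exists_positiveAbove [Finite σ] (hF : IsPartialFamily y z F)
    (hs : StableMultiaffine (F ∅ ∅)) {s T U : Finset ι} (hT : Disjoint s T) (hU : Disjoint s U)
    (hb : PositiveAbove (pairSum y z s (F T U)) b) :
    ∃ S ⊆ s, PositiveAbove (F (T ∪ S) (U ∪ s \ S)) b := by
  induction s using Finset.induction_on generalizing T U with
  | empty => exact ⟨∅, by simpa [pairSum_empty] using hb⟩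
  | insert i s hi ih =>
    obtain ⟨hiT, hsT⟩ := Finset.disjoint_insert_left.1 hT
    obtain ⟨hiU, hsU⟩ := Finset.disjoint_insert_left.1 hU
    have hstable := hF.induction hs (fun _ j hG => hG.pdiff j) T U
    rw [pairSum_insert hi] at hb
    rcases (hstable.pairSum s).positiveAbove_pdiff_or hb with h | h
    · rw [pdiff_pairSum, hF.pdiff_left hiT] at h
      obtain ⟨S, hS, hpos⟩ := ih (Finset.disjoint_insert_right.2 ⟨hi, hsT⟩) hsU h
      refine ⟨insert i S, Finset.insert_subset_insert i hS, ?_⟩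
      rwa [Finset.insert_sdiff_insert, Finset.sdiff_insert_of_notMem hi, Finset.union_insert,
        ← Finset.insert_union]
    · rw [pdiff_pairSum, hF.pdiff_right hiU] at h
      obtain ⟨S, hS, hpos⟩ := ih hsT (Finset.disjoint_insert_right.2 ⟨hi, hsU⟩) h
      refine ⟨S, hS.trans (Finset.subset_insert i s), ?_⟩
      rwa [Finset.insert_sdiff_of_notMem _ (fun h => hi (hS h)), Finset.union_insert,
        ← Finset.insert_union]

theorem IsPartialFamily.exists_positiveAbove_of_barrier [Fintype ι] [Finite σ]
    (hF : IsPartialFamily y z F) (hs : StableMultiaffine (F ∅ ∅)) (ha : PositiveAbove (F ∅ ∅) a)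
    (hpos : 0 < F ∅ Finset.univ a) {δ₁ δ₂ : ℝ} (hδ : 0 ≤ δ₁ + δ₂)
    (hb : ∀ i, (barrier (y i) (F ∅ ∅) a + barrier (z i) (F ∅ ∅) a) * (δ₁ + δ₂) ≤ 1) :
    ∃ S : Finset ι, PositiveAbove (F S Sᶜ)
      (a - ∑ i, (Pi.single (y i) δ₁ + Pi.single (z i) δ₂)) := by
  have hq : 0 < pairSum y z Finset.univ (F ∅ ∅) a :=
    hF.pairSum_pos hs.multiaffine ha.nonnegAbove (Finset.disjoint_empty_right _) (by simpa)
  obtain ⟨S, -, hS⟩ := hF.exists_positiveAbove hs (Finset.disjoint_empty_right _)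
    (Finset.disjoint_empty_right _)
    (ha.pairSum hs hδ (fun i _ => hb i) fun h => hq.ne' (congrFun h a)).1
  exact ⟨S, by simpa [Finset.compl_eq_univ_sdiff] using hS⟩

end PairSum

section DisjointProduct

variable {ι κ K : Type*}

/-- The product of two functions of disjoint sets of variables. -/
def mulSum [Mul K] (P : (ι → K) → K) (Q : (κ → K) → K) (w : ι ⊕ κ → K) : K :=
  P (w ∘ Sum.inl) * Q (w ∘ Sum.inr)

section CommRing

variable [DecidableEq ι] [DecidableEq κ] [CommRing K] {P : (ι → K) → K} {Q : (κ → K) → K}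

theorem mulSum_add_single_inl (w : ι ⊕ κ → K) (i : ι) (t : K) :
    mulSum P Q (w + Pi.single (.inl i) t) =
      P (w ∘ Sum.inl + Pi.single i t) * Q (w ∘ Sum.inr) := by
  have hl : (w + Pi.single (.inl i) t : ι ⊕ κ → K) ∘ Sum.inl = w ∘ Sum.inl + Pi.single i t := by
    ext k
    simp [Pi.single_apply]
  have hr : (w + Pi.single (.inl i) t : ι ⊕ κ → K) ∘ Sum.inr = w ∘ Sum.inr := by
    ext k
    simp
  rw [mulSum, hl, hr]

theorem mulSum_add_single_inr (w : ι ⊕ κ → K) (k : κ) (t : K) :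
    mulSum P Q (w + Pi.single (.inr k) t) =
      P (w ∘ Sum.inl) * Q (w ∘ Sum.inr + Pi.single k t) := by
  have hl : (w + Pi.single (.inr k) t : ι ⊕ κ → K) ∘ Sum.inl = w ∘ Sum.inl := by
    ext i
    simp
  have hr : (w + Pi.single (.inr k) t : ι ⊕ κ → K) ∘ Sum.inr = w ∘ Sum.inr + Pi.single k t := by
    ext i
    simp [Pi.single_apply]
  rw [mulSum, hl, hr]

theorem pdiff_inl_mulSum (i : ι) : pdiff (.inl i) (mulSum P Q) = mulSum (pdiff i P) Q := by
  ext w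
  rw [pdiff_apply, mulSum_add_single_inl, mulSum, mulSum, pdiff_apply]
  ring

theorem pdiff_inr_mulSum (k : κ) : pdiff (.inr k) (mulSum P Q) = mulSum P (pdiff k Q) := by
  ext w
  rw [pdiff_apply, mulSum_add_single_inr, mulSum, mulSum, pdiff_apply]
  ring

protected theorem Multiaffine.mulSum (hP : Multiaffine P) (hQ : Multiaffine Q) :
    Multiaffine (mulSum P Q) := by
  rintro w (i | k) t
  · rw [mulSum_add_single_inl, pdiff_inl_mulSum, hP, mulSum, mulSum]
    ring
  · rw [mulSum_add_single_inr, pdiff_inr_mulSum, hQ, mulSum, mulSum]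
    ring

end CommRing

protected theorem Stable.mulSum {P : (ι → ℂ) → ℂ} {Q : (κ → ℂ) → ℂ} (hP : Stable P)
    (hQ : Stable Q) : Stable (mulSum P Q) :=
  fun _ hw => mul_ne_zero (hP _ fun _ => hw _) (hQ _ fun _ => hw _)

variable [DecidableEq ι] [DecidableEq κ] {P : (ι → ℝ) → ℝ} {Q : (κ → ℝ) → ℝ}

protected theorem StableMultiaffine.mulSum (hP : StableMultiaffine P) (hQ : StableMultiaffine Q) :
    StableMultiaffine (mulSum P Q) := by
  obtain ⟨F, hF⟩ := hP
  obtain ⟨G, hG⟩ := hQ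
  refine ⟨mulSum F G, hF.multiaffine.mulSum hG.multiaffine, fun w => ?_, ?_⟩
  · simp only [mulSum, Complex.ofReal_mul, ← hF.ofReal, ← hG.ofReal, Function.comp_def]
  · rcases hF.eq_zero_or_stable with rfl | hF
    · exact .inl (funext fun w => zero_mul _)
    rcases hG.eq_zero_or_stable with rfl | hG
    · exact .inl (funext fun w => mul_zero _)
    exact .inr (hF.mulSum hG)

theorem barrier_inl_mulSum {w : ι ⊕ κ → ℝ} (h : Q (w ∘ Sum.inr) ≠ 0) (i : ι) :
    barrier (.inl i) (mulSum P Q) w = barrier i P (w ∘ Sum.inl) := by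
  rw [barrier, pdiff_inl_mulSum, mulSum, mulSum, mul_div_mul_right _ _ h, barrier]

theorem barrier_inr_mulSum {w : ι ⊕ κ → ℝ} (h : P (w ∘ Sum.inl) ≠ 0) (k : κ) :
    barrier (.inr k) (mulSum P Q) w = barrier k Q (w ∘ Sum.inr) := by
  rw [barrier, pdiff_inr_mulSum, mulSum, mulSum, mul_div_mul_left _ _ h, barrier]

end DisjointProduct

section LinkPoly

variable {ι : Type*} [DecidableEq ι]

theorem prod_add_single {M : Type*} [CommRing M] (s : Finset ι) (y : ι → M) (i : ι) (t : M) :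
    ∏ j ∈ s, (y + Pi.single i t : ι → M) j =
      ∏ j ∈ s, y j + if i ∈ s then t * ∏ j ∈ s.erase i, y j else 0 := by
  have hprod : ∀ u : Finset ι, i ∉ u → ∏ j ∈ u, (y + Pi.single i t : ι → M) j = ∏ j ∈ u, y j :=
    fun u hu => Finset.prod_congr rfl fun j hj => by simp [ne_of_mem_of_not_mem hj hu]
  split_ifs with h
  · rw [← Finset.mul_prod_erase s _ h, ← Finset.mul_prod_erase s _ h,
      hprod _ (Finset.notMem_erase i s)]
    simp [add_mul]
  · rw [hprod s h, add_zero]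

variable [Fintype ι] {K : Type*} [CommRing K]

/-- The generating polynomial of `μ`, differentiated in the variables `y i` with `i ∈ T`: up to
normalization, the generating polynomial of the link of `T`. -/
def linkPoly (μ : Finset ι → K) (T : Finset ι) (y : ι → K) : K :=
  ∑ S with T ⊆ S, μ S * ∏ i ∈ S \ T, y i

theorem linkPoly_add_single (μ : Finset ι → K) {T : Finset ι} (y : ι → K) {i : ι} (hi : i ∉ T)
    (t : K) : linkPoly μ T (y + Pi.single i t) =
      linkPoly μ T y + t * linkPoly μ (insert i T) y := by
  simp only [linkPoly, prod_add_single, Finset.mem_sdiff, hi, not_false_eq_true, and_true,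
    mul_add, Finset.sum_add_distrib, add_right_inj, mul_ite, mul_zero, ← Finset.sum_filter,
    Finset.filter_filter, Finset.insert_subset_iff, Finset.sdiff_insert, Finset.mul_sum]
  simp only [and_comm, mul_left_comm]

theorem pdiff_linkPoly (μ : Finset ι → K) {T : Finset ι} {i : ι} (hi : i ∉ T) :
    pdiff i (linkPoly μ T) = linkPoly μ (insert i T) :=
  pdiff_eq_of_add_single fun y => by rw [linkPoly_add_single μ y hi, one_mul]

theorem multiaffine_linkPoly_empty (μ : Finset ι → K) : Multiaffine (linkPoly μ ∅) :=
  multiaffine_of_add_single fun y i t => linkPoly_add_single μ y (Finset.notMem_empty i) t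

theorem linkPoly_zero (μ : Finset ι → K) (T : Finset ι) : linkPoly μ T 0 = μ T := by
  rw [linkPoly, Finset.sum_eq_single T]
  · simp
  · intro S hS hST
    obtain ⟨j, hj⟩ : (S \ T).Nonempty := Finset.sdiff_nonempty.2 fun h =>
      hST (h.antisymm (Finset.mem_filter.1 hS).2)
    rw [Finset.prod_eq_zero hj (Pi.zero_apply j), mul_zero]
  · simp

variable {μ : Finset ι → ℝ}

theorem stableMultiaffine_linkPoly_empty
    (h : RealStable (∑ S : Finset ι, MvPolynomial.C (μ S) * ∏ i ∈ S, MvPolynomial.X i)) :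
    StableMultiaffine (linkPoly μ ∅) := by
  refine ⟨linkPoly (fun S => (μ S : ℂ)) ∅, multiaffine_linkPoly_empty _, fun y => ?_,
    .inr fun z hz => ?_⟩
  · simp [linkPoly]
  · simpa [linkPoly] using h z hz

theorem linkPoly_empty_pos (hμ0 : ∀ S, 0 ≤ μ S) (hμ1 : ∑ S, μ S = 1) {y : ι → ℝ}
    (hy : ∀ i, 0 < y i) : 0 < linkPoly μ ∅ y := by
  obtain ⟨S, -, hS⟩ : ∃ S ∈ Finset.univ, μ S ≠ 0 :=
    Finset.exists_ne_zero_of_sum_ne_zero (hμ1 ▸ one_ne_zero)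
  exact Finset.sum_pos' (fun S _ => mul_nonneg (hμ0 S) (Finset.prod_nonneg fun i _ => (hy i).le))
    ⟨S, by simp, mul_pos ((hμ0 S).lt_of_ne' hS) (Finset.prod_pos fun i _ => hy i)⟩

theorem linkPoly_empty_const {d : ℕ} (hμ1 : ∑ S, μ S = 1) (hd : ∀ S, μ S ≠ 0 → S.card = d)
    (t : ℝ) : linkPoly μ ∅ (fun _ => t) = t ^ d := by
  rw [linkPoly, ← one_mul (t ^ d), ← hμ1, Finset.sum_mul]
  refine Finset.sum_congr (by simp) fun S _ => ?_
  by_cases hS : μ S = 0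
  · simp [hS]
  · simp [hd S hS]

theorem mul_linkPoly_singleton_const {d : ℕ} (hd : ∀ S, μ S ≠ 0 → S.card = d) (t : ℝ) (i : ι) :
    t * linkPoly μ {i} (fun _ => t) = (∑ S with i ∈ S, μ S) * t ^ d := by
  rw [linkPoly, Finset.mul_sum, Finset.sum_mul]
  refine Finset.sum_congr (by simp) fun S hS => ?_
  by_cases h0 : μ S = 0
  · simp [h0]
  · rw [Finset.prod_const, ← hd S h0,
      ← Finset.card_sdiff_add_card_eq_card
        (Finset.singleton_subset_iff.2 (Finset.mem_filter.1 hS).2), Finset.card_singleton, pow_succ]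
    ring

theorem barrier_linkPoly_const (hμ1 : ∑ S, μ S = 1) (hhom : ∃ d : ℕ, ∀ S, μ S ≠ 0 → S.card = d)
    {t : ℝ} (ht : t ≠ 0) (i : ι) :
    barrier i (linkPoly μ ∅) (fun _ => t) = (∑ S with i ∈ S, μ S) / t := by
  obtain ⟨d, hd⟩ := hhom
  rw [barrier, pdiff_linkPoly μ (Finset.notMem_empty i), insert_empty_eq,
    linkPoly_empty_const hμ1 hd, div_eq_div_iff (pow_ne_zero d ht) ht,
    ← mul_linkPoly_singleton_const hd, mul_comm]

end LinkPoly

section RowDet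

variable {ι K : Type*} [DecidableEq ι] [CommRing K]

/-- The matrix `diag z - A` with the rows in `U` replaced by those of the identity. -/
def rowMatrix (A : Matrix ι ι K) (U : Finset ι) (z : ι → K) : Matrix ι ι K :=
  Matrix.of fun i => if i ∈ U then (1 : Matrix ι ι K) i else (Matrix.diagonal z - A) i

theorem rowMatrix_insert (A : Matrix ι ι K) (U : Finset ι) (z : ι → K) (i : ι) :
    rowMatrix A (insert i U) z = (rowMatrix A U z).updateRow i ((1 : Matrix ι ι K) i) := by
  ext j k
  rcases eq_or_ne j i with rfl | hj
  · simp [rowMatrix]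
  · simp [rowMatrix, hj]

theorem rowMatrix_add_single (A : Matrix ι ι K) {U : Finset ι} (z : ι → K) {i : ι} (hi : i ∉ U)
    (t : K) : rowMatrix A U (z + Pi.single i t) =
      (rowMatrix A U z).updateRow i (rowMatrix A U z i + t • (1 : Matrix ι ι K) i) := by
  ext j k
  rcases eq_or_ne j i with rfl | hj
  · rw [Matrix.updateRow_self]
    simp only [rowMatrix, Matrix.of_apply, if_neg hi, Matrix.sub_apply, Matrix.diagonal_apply,
      Matrix.one_apply, Pi.add_apply, Pi.smul_apply, Pi.single_eq_same, smul_eq_mul]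
    split_ifs <;> ring
  · rw [Matrix.updateRow_ne hj]
    by_cases hjU : j ∈ U <;> simp [rowMatrix, Matrix.diagonal_apply, hj, hjU]

variable [Fintype ι]

/-- The partial derivative of `z ↦ det (diag z - A)` in the variables `z i` with `i ∈ U`, that is,
`det (diag z - A)` with the rows and columns in `U` deleted. -/
def rowDet (A : Matrix ι ι K) (U : Finset ι) (z : ι → K) : K := (rowMatrix A U z).det

theorem rowDet_empty (A : Matrix ι ι K) (z : ι → K) :
    rowDet A ∅ z = (Matrix.diagonal z - A).det := by
  simp only [rowDet, rowMatrix, Finset.notMem_empty, if_false]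
  rfl

theorem rowDet_univ (A : Matrix ι ι K) (z : ι → K) : rowDet A Finset.univ z = 1 := by
  simp only [rowDet, rowMatrix, Finset.mem_univ, if_true]
  exact Matrix.det_one

theorem rowDet_compl (A : Matrix ι ι K) (S : Finset ι) (z : ι → K) :
    rowDet A Sᶜ z =
      ((Matrix.diagonal z - A).submatrix (Subtype.val : {x // x ∈ S} → ι) Subtype.val).det := by
  have hblock : (rowMatrix A Sᶜ z).toSquareBlockProp (· ∈ S) =
      (Matrix.diagonal z - A).submatrix (Subtype.val : {x // x ∈ S} → ι) Subtype.val := by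
    ext i j
    simp [rowMatrix, Matrix.toSquareBlockProp_def]
  have hone : (rowMatrix A Sᶜ z).toSquareBlockProp (· ∉ S) = 1 := by
    ext i j
    simp [rowMatrix, Matrix.toSquareBlockProp_def, Matrix.one_apply, Subtype.ext_iff, i.2]
  rw [rowDet, Matrix.twoBlockTriangular_det _ (· ∈ S), hblock, hone, Matrix.det_one, mul_one]
  · congr!
  · intro i hi j hj
    simp [rowMatrix, hi, (ne_of_mem_of_not_mem hj hi).symm]

theorem rowDet_add_single (A : Matrix ι ι K) {U : Finset ι} (z : ι → K) {i : ι} (hi : i ∉ U)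
    (t : K) : rowDet A U (z + Pi.single i t) = rowDet A U z + t * rowDet A (insert i U) z := by
  rw [rowDet, rowMatrix_add_single A z hi, Matrix.det_updateRow_add, Matrix.det_updateRow_smul,
    Matrix.updateRow_eq_self, ← rowMatrix_insert, rowDet, rowDet]

theorem pdiff_rowDet (A : Matrix ι ι K) {U : Finset ι} {i : ι} (hi : i ∉ U) :
    pdiff i (rowDet A U) = rowDet A (insert i U) :=
  pdiff_eq_of_add_single fun z => by rw [rowDet_add_single A z hi, one_mul]

theorem multiaffine_rowDet_empty (A : Matrix ι ι K) : Multiaffine (rowDet A ∅) :=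
  multiaffine_of_add_single fun z i t => rowDet_add_single A z (Finset.notMem_empty i) t

end RowDet

section Hermitian

variable {ι : Type*} [DecidableEq ι] {A : Matrix ι ι ℂ}

/-- The real part of a function of complex variables, at real arguments; for a polynomial with real
coefficients, its restriction to them. -/
def realRestrict (F : (ι → ℂ) → ℂ) (w : ι → ℝ) : ℝ := (F fun i => (w i : ℂ)).re

theorem pdiff_realRestrict (F : (ι → ℂ) → ℂ) (i : ι) :
    pdiff i (realRestrict F) = realRestrict (pdiff i F) := by
  ext w
  simp only [pdiff_apply, realRestrict, ofReal_add_single, Complex.ofReal_one, Complex.sub_re]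

theorem posDef_diagonal_sub (hAc : (1 - A).PosSemidef) {z : ι → ℝ} (hz : ∀ i, 1 < z i) :
    (Matrix.diagonal (fun i => (z i : ℂ)) - A).PosDef := by
  have hdiag : (Matrix.diagonal fun i => ((z i - 1 : ℝ) : ℂ)).PosDef :=
    Matrix.PosDef.diagonal fun i => Complex.zero_lt_real.2 (sub_pos.2 (hz i))
  have hsplit : Matrix.diagonal (fun i => (z i : ℂ)) - A =
      Matrix.diagonal (fun i => ((z i - 1 : ℝ) : ℂ)) + (1 - A) := by
    rw [← Matrix.diagonal_one, ← add_sub_assoc, Matrix.diagonal_add]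
    simp
  exact hsplit ▸ hdiag.add_posSemidef hAc

-- With `c = s / (s - 1)` and `E` the diagonal matrix unit at `i`, the matrix is
-- `(s - 1) (1 - c E) A (1 - c E) + s (1 - E) (1 - A) (1 - E)`.
theorem posSemidef_const_add_single_sub [Finite ι] (hA : A.PosSemidef) (hAc : (1 - A).PosSemidef)
    {s : ℝ} (hs : 1 < s) (i : ι) :
    (Matrix.diagonal (fun k =>
      (((fun _ => s) + Pi.single i (-(s - s * (A i i).re / (s - 1))) : ι → ℝ) k : ℂ)) -
        A).PosSemidef := by
  cases nonempty_fintype ι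
  obtain ⟨a, ha⟩ : ∃ a : ℝ, A i i = a := Complex.conj_eq_iff_real.1 (hA.isHermitian.apply i i)
  have hs1 : (s : ℂ) - 1 ≠ 0 := by exact_mod_cast (sub_pos.2 hs).ne'
  set u : ι → ℂ := fun k => ((if k = i then -1 / (s - 1) else 1 : ℝ) : ℂ)
  set f : ι → ℂ := fun k => ((if k = i then 0 else 1 : ℝ) : ℂ)
  have hu : (Matrix.diagonal u * A * Matrix.diagonal u).PosSemidef := by
    simpa [Matrix.diagonal_conjTranspose, u, Pi.star_def] using
      hA.mul_mul_conjTranspose_same (Matrix.diagonal u)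
  have hf : (Matrix.diagonal f * (1 - A) * Matrix.diagonal f).PosSemidef := by
    simpa [Matrix.diagonal_conjTranspose, f, Pi.star_def] using
      hAc.mul_mul_conjTranspose_same (Matrix.diagonal f)
  convert (hu.smul (Complex.zero_le_real.2 (sub_pos.2 hs).le)).add
    (hf.smul (Complex.zero_le_real.2 (zero_le_one.trans hs.le))) using 1
  ext j k
  simp only [Matrix.sub_apply, Matrix.add_apply, Matrix.smul_apply, Matrix.mul_diagonal,
    Matrix.diagonal_mul, Matrix.diagonal_apply, Matrix.one_apply, Pi.add_apply, Pi.single_apply,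
    smul_eq_mul, u, f]
  rcases eq_or_ne j i with hj | hj <;> rcases eq_or_ne k i with hk | hk
  · simp only [hj, hk, ha, if_pos, Complex.ofReal_re]
    push_cast
    field_simp
    ring
  · simp only [hj, if_pos, if_neg hk, if_neg hk.symm]
    push_cast
    field_simp
    ring
  · simp only [hk, if_pos, if_neg hj]
    push_cast
    field_simp
    ring
  · simp only [if_neg hj, if_neg hk]
    push_cast
    split_ifs <;> ring

variable [Fintype ι]

theorem realRestrict_rowDet_empty_pos (hAc : (1 - A).PosSemidef) {z : ι → ℝ} (hz : ∀ i, 1 < z i) :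
    0 < realRestrict (rowDet A ∅) z := by
  rw [realRestrict, rowDet_empty]
  exact (Complex.lt_def.1 (posDef_diagonal_sub hAc hz).det_pos).1

theorem stable_rowDet_empty (hA : A.IsHermitian) : Stable (rowDet A ∅) := by
  intro z hz hdet
  rw [rowDet_empty] at hdet
  obtain ⟨v, hv, hker⟩ := Matrix.exists_mulVec_eq_zero_iff.2 hdet
  have hquad : (star v ⬝ᵥ (Matrix.diagonal z).mulVec v).im =
      ∑ i, (z i).im * Complex.normSq (v i) := by
    simp only [dotProduct, Matrix.mulVec_diagonal, Complex.im_sum]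
    refine Finset.sum_congr rfl fun i _ => ?_
    rw [Pi.star_apply, mul_left_comm, ← starRingEnd_apply, ← Complex.normSq_eq_conj_mul_self,
      Complex.im_mul_ofReal]
  have hsum : ∑ i, (z i).im * Complex.normSq (v i) = 0 := by
    rw [← hquad, sub_eq_zero.1 ((Matrix.sub_mulVec _ _ v).symm.trans hker)]
    exact hA.im_star_dotProduct_mulVec_self v
  refine hv (funext fun i => Complex.normSq_eq_zero.1 ?_)
  exact (mul_eq_zero.1 ((Finset.sum_eq_zero_iff_of_nonneg fun i _ =>
    mul_nonneg (hz i).le (Complex.normSq_nonneg _)).1 hsum i (Finset.mem_univ i))).resolve_left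
      (hz i).ne'

theorem stableMultiaffine_realRestrict_rowDet_empty (hA : A.IsHermitian) :
    StableMultiaffine (realRestrict (rowDet A ∅)) := by
  refine ⟨rowDet A ∅, multiaffine_rowDet_empty A, fun w => ?_, .inr (stable_rowDet_empty hA)⟩
  have hM : (Matrix.diagonal (fun i => (w i : ℂ)) - A).IsHermitian :=
    (Matrix.isHermitian_diagonal_of_self_adjoint _ (by ext; simp)).sub hA
  rw [realRestrict, rowDet_empty]
  exact (Complex.conj_eq_iff_re.1 ((Matrix.det_conjTranspose _).symm.trans (by rw [hM.eq]))).symm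

theorem barrier_realRestrict_rowDet_le (hA : A.PosSemidef) (hAc : (1 - A).PosSemidef) {s α : ℝ}
    {i : ι} (hs : 1 < s) (hα : (A i i).re ≤ α) (hb : 0 < s - s * α / (s - 1)) :
    barrier i (realRestrict (rowDet A ∅)) (fun _ => s) ≤ 1 / (s - s * α / (s - 1)) := by
  have hm := (stableMultiaffine_realRestrict_rowDet_empty hA.isHermitian).multiaffine
  have hpos : PositiveAbove (realRestrict (rowDet A ∅)) fun _ => s := fun z hz =>
    realRestrict_rowDet_empty_pos hAc fun i => hs.trans_le (hz i)
  have hnn := (Complex.le_def.1 (posSemidef_const_add_single_sub hA hAc hs i).det_nonneg).1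
  rw [← rowDet_empty, Complex.zero_re] at hnn
  have hmove := hm (fun _ => s) i (-(s - s * (A i i).re / (s - 1)))
  have hle : s * (A i i).re / (s - 1) ≤ s * α / (s - 1) := by
    have := sub_pos.2 hs
    gcongr
  rw [barrier, div_le_div_iff₀ (hpos _ le_rfl) hb]
  have hq' := hpos.nonnegAbove.pdiff hm i _ le_rfl
  rw [realRestrict] at hmove
  nlinarith [mul_le_mul_of_nonneg_left hle hq']

end Hermitian

section MixedPoly

variable {ι : Type*} [Fintype ι] [DecidableEq ι] {μ : Finset ι → ℝ} {A : Matrix ι ι ℂ}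

/-- The product of the link of `T` in the generating polynomial of `μ` with `det (diag z - A)`
differentiated in the variables `z i` for `i ∈ U`. At `y = 0` and `U = Tᶜ` it is `μ T` times the
characteristic polynomial of the principal submatrix `A(T)`. -/
def mixedPoly (μ : Finset ι → ℝ) (A : Matrix ι ι ℂ) (T U : Finset ι) : (ι ⊕ ι → ℝ) → ℝ :=
  mulSum (linkPoly μ T) (realRestrict (rowDet A U))

theorem isPartialFamily_mixedPoly (μ : Finset ι → ℝ) (A : Matrix ι ι ℂ) :
    IsPartialFamily Sum.inl Sum.inr (mixedPoly μ A) where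
  pdiff_left hi := by rw [mixedPoly, pdiff_inl_mulSum, pdiff_linkPoly μ hi, mixedPoly]
  pdiff_right hi := by
    rw [mixedPoly, pdiff_inr_mulSum, pdiff_realRestrict, pdiff_rowDet A hi, mixedPoly]

theorem barrier_mixedPoly_add_le (hμ0 : ∀ S, 0 ≤ μ S) (hμ1 : ∑ S, μ S = 1)
    (hhom : ∃ d : ℕ, ∀ S, μ S ≠ 0 → S.card = d) (hA : A.PosSemidef) (hAc : (1 - A).PosSemidef)
    {ε α s t : ℝ} {i : ι} (hmarg : ∑ S with i ∈ S, μ S ≤ ε) (hdiag : (A i i).re ≤ α) (hs : 1 < s)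
    (ht : 0 < t) (hb : 0 < s - s * α / (s - 1)) :
    barrier (.inl i) (mixedPoly μ A ∅ ∅) (Sum.elim (fun _ => t) fun _ => s) +
      barrier (.inr i) (mixedPoly μ A ∅ ∅) (Sum.elim (fun _ => t) fun _ => s) ≤
        ε / t + 1 / (s - s * α / (s - 1)) := by
  rw [mixedPoly, barrier_inl_mulSum (realRestrict_rowDet_empty_pos hAc fun _ => hs).ne',
    barrier_inr_mulSum (linkPoly_empty_pos hμ0 hμ1 fun _ => ht).ne', Sum.elim_comp_inl,
    Sum.elim_comp_inr, barrier_linkPoly_const hμ1 hhom ht.ne']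
  gcongr
  exact barrier_realRestrict_rowDet_le hA hAc hs hdiag hb

theorem exists_det_diagonal_sub_submatrix_ne_zero (hμ0 : ∀ S, 0 ≤ μ S) (hμ1 : ∑ S, μ S = 1)
    (hSR : RealStable (∑ S : Finset ι, MvPolynomial.C (μ S) * ∏ i ∈ S, MvPolynomial.X i))
    (hhom : ∃ d : ℕ, ∀ S, μ S ≠ 0 → S.card = d) (hA : A.PosSemidef) (hAc : (1 - A).PosSemidef)
    {ε α s t δ : ℝ} (hmarg : ∀ i, ∑ S with i ∈ S, μ S ≤ ε) (hdiag : ∀ i, (A i i).re ≤ α)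
    (hs : 1 < s) (ht : 0 < t) (hδ : 0 ≤ t + δ) (hb : 0 < s - s * α / (s - 1))
    (hbar : (ε / t + 1 / (s - s * α / (s - 1))) * (t + δ) ≤ 1) :
    ∃ S, 0 < μ S ∧ ∀ x : ℝ, s - δ ≤ x → ((Matrix.diagonal (fun _ => (x : ℂ)) - A).submatrix
      (Subtype.val : {i // i ∈ S} → ι) Subtype.val).det ≠ 0 := by
  have hpos : PositiveAbove (mixedPoly μ A ∅ ∅) (Sum.elim (fun _ => t) fun _ => s) := fun w hw =>
    mul_pos (linkPoly_empty_pos hμ0 hμ1 fun i => ht.trans_le (hw (.inl i)))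
      (realRestrict_rowDet_empty_pos hAc fun i => hs.trans_le (hw (.inr i)))
  have huniv : 0 < mixedPoly μ A ∅ Finset.univ (Sum.elim (fun _ => t) fun _ => s) :=
    mul_pos (linkPoly_empty_pos hμ0 hμ1 fun _ => ht) (by simp [realRestrict, rowDet_univ])
  obtain ⟨S, hS⟩ := (isPartialFamily_mixedPoly μ A).exists_positiveAbove_of_barrier
    ((stableMultiaffine_linkPoly_empty hSR).mulSum
      (stableMultiaffine_realRestrict_rowDet_empty hA.isHermitian)) hpos huniv hδ fun i =>
    (mul_le_mul_of_nonneg_right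
      (barrier_mixedPoly_add_le hμ0 hμ1 hhom hA hAc (hmarg i) (hdiag i) hs ht hb) hδ).trans hbar
  have hprod : ∀ x : ℝ, s - δ ≤ x → 0 < μ S * (rowDet A Sᶜ fun _ => (x : ℂ)).re := fun x hx => by
    have h := hS (Sum.elim 0 fun _ => x) <| by
      rintro (i | i) <;> simp [Finset.sum_add_distrib, Pi.single_apply, hx]
    rwa [mixedPoly, mulSum, Sum.elim_comp_inl, linkPoly_zero] at h
  refine ⟨S, (hμ0 S).lt_of_ne' (left_ne_zero_of_mul (hprod _ le_rfl).ne'), fun x hx h0 => ?_⟩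
  have h := hprod x hx
  rw [rowDet_compl, h0, Complex.zero_re, mul_zero] at h
  exact h.false

end MixedPoly

section Eigenvalues

variable {ι : Type*} [DecidableEq ι] {A : Matrix ι ι ℂ}

theorem re_lt_of_isRoot_charpoly_submatrix (hA : A.IsHermitian) {S : Finset ι} {x : ℝ}
    (h : ∀ r : ℝ, x ≤ r → ((Matrix.diagonal (fun _ => (r : ℂ)) - A).submatrix
      (Subtype.val : {i // i ∈ S} → ι) Subtype.val).det ≠ 0) {z : ℂ}
    (hz : (A.submatrix (Subtype.val : {i // i ∈ S} → ι) Subtype.val).charpoly.IsRoot z) :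
    z.re < x := by
  have hM := hA.submatrix (Subtype.val : {i // i ∈ S} → ι)
  obtain ⟨r, rfl⟩ : ∃ r : ℝ, z = r := by
    rw [hM.charpoly_eq, Polynomial.IsRoot, Polynomial.eval_prod, Finset.prod_eq_zero_iff] at hz
    obtain ⟨i, -, hi⟩ := hz
    exact ⟨hM.eigenvalues i, by simpa [sub_eq_zero] using hi⟩
  rw [Polynomial.IsRoot, Matrix.eval_charpoly] at hz
  by_contra! hr
  refine h r hr ?_
  rwa [Matrix.submatrix_sub, Pi.sub_apply, Pi.sub_apply,
    Matrix.submatrix_diagonal _ _ Subtype.val_injective]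

variable [Fintype ι] {μ : Finset ι → ℝ}

-- With `ε = r ^ 2` and `b = s - s * α / (s - 1)`, the barrier condition
-- `(ε / t + 1 / b) * (t + δ) ≤ 1` allows the largest step `δ = (1 - r) ^ 2 * b` at
-- `t = (r - r ^ 2) * b`.
theorem exists_forall_re_lt_of_barrier (hμ0 : ∀ S, 0 ≤ μ S) (hμ1 : ∑ S, μ S = 1)
    (hSR : RealStable (∑ S : Finset ι, MvPolynomial.C (μ S) * ∏ i ∈ S, MvPolynomial.X i))
    (hhom : ∃ d : ℕ, ∀ S, μ S ≠ 0 → S.card = d) (hA : A.PosSemidef) (hAc : (1 - A).PosSemidef)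
    {r α s : ℝ} (hr0 : 0 < r) (hr1 : r < 1) (hmarg : ∀ i, ∑ S with i ∈ S, μ S ≤ r ^ 2)
    (hdiag : ∀ i, (A i i).re ≤ α) (hs : 1 < s) (hb : 0 < s - s * α / (s - 1)) :
    ∃ S, 0 < μ S ∧ ∀ z : ℂ,
      (A.submatrix (Subtype.val : {i // i ∈ S} → ι) Subtype.val).charpoly.IsRoot z →
        z.re < s - (1 - r) ^ 2 * (s - s * α / (s - 1)) := by
  have ht : 0 < (r - r ^ 2) * (s - s * α / (s - 1)) := mul_pos (by nlinarith) hb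
  obtain ⟨S, hS, hdet⟩ := exists_det_diagonal_sub_submatrix_ne_zero hμ0 hμ1 hSR hhom hA hAc hmarg
    hdiag hs ht (δ := (1 - r) ^ 2 * (s - s * α / (s - 1))) (by positivity) hb <| le_of_eq <| by
      generalize s - s * α / (s - 1) = b at hb
      have hr := (sub_pos.2 hr1).ne'
      rw [show r - r ^ 2 = r * (1 - r) by ring]
      field_simp
      ring
  exact ⟨S, hS, fun z => re_lt_of_isRoot_charpoly_submatrix hA.isHermitian hdet⟩

theorem barrier_bound_lt {e α : ℝ} (he : 0 < e) (he4 : e ≤ 1 / 4) (hα0 : 0 ≤ α) (hα1 : α ≤ 1) :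
    1 + 1 / e - (1 - e ^ 2) ^ 2 * (1 + 1 / e - (1 + e) * α) < 4 * e + α := by
  have hlow : 1 - 2 * e ^ 2 ≤ (1 - e ^ 2) ^ 2 := by nlinarith [sq_nonneg (e ^ 2)]
  have hup : (1 - e ^ 2) ^ 2 ≤ 1 := pow_le_one₀ (by nlinarith) (by nlinarith)
  calc
    1 + 1 / e - (1 - e ^ 2) ^ 2 * (1 + 1 / e - (1 + e) * α)
      = (1 - (1 - e ^ 2) ^ 2) * (1 + 1 / e) + (1 - e ^ 2) ^ 2 * ((1 + e) * α) := by ring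
    _ ≤ 2 * e ^ 2 * (1 + 1 / e) + 1 * ((1 + e) * α) := by
      gcongr
      linarith
    _ = 2 * e ^ 2 + 2 * e + (1 + e) * α := by field_simp
    _ < 4 * e + α := by nlinarith

theorem strongly_rayleigh_eigenvalue_bound_general (hμ0 : ∀ S, 0 ≤ μ S) (hμ1 : ∑ S, μ S = 1)
    (hSR : RealStable (∑ S : Finset ι, MvPolynomial.C (μ S) * ∏ i ∈ S, MvPolynomial.X i))
    (hhom : ∃ d : ℕ, ∀ S, μ S ≠ 0 → S.card = d) {ε : ℝ} (hε : 0 < ε)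
    (hmarg : ∀ i, ∑ S with i ∈ S, μ S ≤ ε) (hA : A.PosSemidef) (hAc : (1 - A).PosSemidef) {α : ℝ}
    (hα : 0 ≤ α) (hdiag : ∀ i, (A i i).re ≤ α) :
    ∃ S, 0 < μ S ∧ ∀ z : ℂ,
      (A.submatrix (Subtype.val : {i // i ∈ S} → ι) Subtype.val).charpoly.IsRoot z →
        z.re < 4 * ε ^ ((1 : ℝ) / 4) + α := by
  obtain ⟨e, he, rfl⟩ : ∃ e : ℝ, 0 < e ∧ e ^ 4 = ε :=
    ⟨ε ^ ((4 : ℕ) : ℝ)⁻¹, by positivity, Real.rpow_inv_natCast_pow hε.le (by norm_num)⟩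
  have hroot : (e ^ 4) ^ ((1 : ℝ) / 4) = e := by
    rw [one_div]
    exact_mod_cast Real.pow_rpow_inv_natCast he.le (n := 4) (by norm_num)
  rw [hroot]
  rcases lt_or_ge 1 (4 * e + α) with hlarge | hsmall
  · obtain ⟨S, -, hS⟩ := Finset.exists_ne_zero_of_sum_ne_zero (hμ1 ▸ one_ne_zero)
    refine ⟨S, (hμ0 S).lt_of_ne' hS, fun z => re_lt_of_isRoot_charpoly_submatrix hA.isHermitian
      fun r hr => ?_⟩
    exact ((posDef_diagonal_sub hAc fun _ => hlarge.trans_le hr).submatrix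
      Subtype.val_injective).det_pos.ne'
  · have hα1 : α ≤ 1 := by linarith
    have hinv : 4 ≤ 1 / e := (le_div_iff₀ he).2 (by linarith)
    have hbarrier : 1 + 1 / e - (1 + 1 / e) * α / (1 + 1 / e - 1) = 1 + 1 / e - (1 + e) * α := by
      rw [add_sub_cancel_left]
      field_simp
      ring
    obtain ⟨S, hS, hroots⟩ := exists_forall_re_lt_of_barrier hμ0 hμ1 hSR hhom hA hAc
      (r := e ^ 2) (s := 1 + 1 / e) (by positivity) (by nlinarith)
      (fun i => (hmarg i).trans_eq (by ring)) hdiag (by linarith) (by rw [hbarrier]; nlinarith)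
    refine ⟨S, hS, fun z hz => (hroots z hz).trans ?_⟩
    rw [hbarrier]
    exact barrier_bound_lt he (by linarith) hα hα1

end Eigenvalues

/-- Eigenvalue bound upon sampling from a homogeneous Strongly Rayleigh measure with
small marginals: there is a set `S` in the support of `μ` such that all eigenvalues of
`A(S)` are strictly less than `4·ε^{1/4} + α`. -/
theorem strongly_rayleigh_eigenvalue_bound {n : ℕ} (μ : Finset (Fin n) → ℝ)
    (hμ0 : ∀ S, 0 ≤ μ S) (hμ1 : ∑ S : Finset (Fin n), μ S = 1)
    (hSR : RealStable (genPoly μ))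
    (hhom : ∃ d : ℕ, ∀ S, μ S ≠ 0 → S.card = d)
    (hne : ∀ S, μ S ≠ 0 → S.Nonempty)
    (ε : ℝ) (hε0 : 0 < ε) (hε1 : ε ≤ 1)
    (hmarg : ∀ i : Fin n, ∑ S ∈ Finset.univ.filter (fun S : Finset (Fin n) => i ∈ S), μ S ≤ ε)
    (A : Matrix (Fin n) (Fin n) ℂ) (hA : A.PosSemidef) (hAc : (1 - A).PosSemidef)
    (α : ℝ) (hα : 0 ≤ α) (hdiag : ∀ i, (A i i).re ≤ α)
    (hsq : Real.sqrt α + Real.sqrt ε ≤ 1) :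
    ∃ S : Finset (Fin n), 0 < μ S ∧
      ∀ z : ℂ, ((subMat A S).charpoly).IsRoot z →
        z.re < 4 * ε ^ ((1 : ℝ) / 4) + α :=
  strongly_rayleigh_eigenvalue_bound_general hμ0 hμ1 hSR hhom hε0 hmarg hA hAc hα hdiag
end
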